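/- Let a > 0 with a ≠ 1 and let s > a/4. Then there exists a constant C > 0, independent of f, such that for every f ∈ C_c^∞(ℝ \ {0}) one has ‖S^a f‖_{L²(ℝ, L^∞(B))} ≤ C ‖f‖_{H^s(ℝ)}. -/

import Mathlib

open MeasureTheory Real

noncomputable section

/-- The one-dimensional Fourier transform `f̂(ξ) = ∫ e^{-i x ξ} f(x) dx`. -/
def FT1 (f : ℝ → ℂ) (ξ : ℝ) : ℂ :=
  ∫ x, Complex.exp (-(Complex.I * (x * ξ : ℝ))) * f x

/-- The oscillatory integral `S^a f(x,t) = (2π)⁻¹ ∫ e^{i(xξ + t|ξ|^a)} f̂(ξ) dξ`. -/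
def Sosc1 (a : ℝ) (f : ℝ → ℂ) (x t : ℝ) : ℂ :=
  ((2 * π : ℝ) : ℂ)⁻¹ * ∫ ξ, Complex.exp (Complex.I * ((x * ξ + t * |ξ| ^ a : ℝ) : ℂ)) * FT1 f ξ

/-!
Selecting measurably, at each point `x`, a time `t(x)` at which `S^a f(x, ·)` is nearly maximal
turns the maximal estimate into an `L²` bound, uniform in `t`, for the linear operator sending `f̂`
to `x ↦ S^a f(x, t(x))`, or dually for its adjoint. On a frequency annulus `|ξ| ~ R`, the `TT*`
identity writes the squared norm of the adjoint as a quadratic form with kernel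
`K(x - y, t(x) - t(y))`, so Schur's test bounds it by the `L¹` norm of `sup_t |K(x, t)|`. After
rescaling to `R = 1`, where times run up to `T ~ R^a`, van der Corput's lemma and integration by
parts give `|K(x, t)| ≲ T^{-1/2} min(|x/T|^{-1/2}, |x/T|^{-2})`, so that this `L¹` norm is
`O(R^{a/2})`. Against the weight `(1 + |ξ|²)^{-s}` the annuli `R = 2^k` contribute
`O(2^{(a/2 - 2s)k})`, which is summable for `s > a/4`. On low frequencies `t|ξ|^a` is bounded, and
expanding `e^{it|ξ|^a}` in powers of `t|ξ|^a` reduces matters to the case `t = 0`, where a Gaussian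
weight gives an integrable kernel.
-/

open Set Filter Topology
open scoped ENNReal NNReal SchwartzMap FourierTransform

section VanDerCorput

/-- The factor `r` for which `e^{iθ} r` is the error made when `-i e^{iθ} u / (u² + κ)` is used as a
primitive of `e^{iθ}`, where `u = θ'` and `v = θ''`. Regularizing the classical `-i e^{iθ} / u` in
this way avoids any case distinction at stationary points of `θ`. -/
def vdcRemainder (κ u v : ℝ) : ℂ :=
  (κ / (u ^ 2 + κ) : ℝ) + Complex.I * (v * (κ - u ^ 2) / (u ^ 2 + κ) ^ 2 : ℝ)

variable {θ u v : ℝ → ℝ} {α β κ : ℝ}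

lemma hasDerivAt_exp_mul_div_sq_add (hκ : 0 < κ) {η : ℝ} (hθ : HasDerivAt θ (u η) η)
    (hu : HasDerivAt u (v η) η) :
    HasDerivAt (fun η ↦ -Complex.I * ((u η / (u η ^ 2 + κ) : ℝ) * Complex.exp (Complex.I * θ η)))
      (Complex.exp (Complex.I * θ η) - Complex.exp (Complex.I * θ η) * vdcRemainder κ (u η) (v η))
      η := by
  have hden : u η ^ 2 + κ ≠ 0 := by positivity
  have hquot : HasDerivAt (fun η ↦ u η / (u η ^ 2 + κ))
      (v η * (κ - u η ^ 2) / (u η ^ 2 + κ) ^ 2) η := by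
    refine (hu.fun_div ((hu.fun_pow 2).add_const κ) hden).congr_deriv ?_
    push_cast
    ring
  refine ((hquot.ofReal_comp.mul (hθ.ofReal_comp.const_mul Complex.I).cexp).const_mul
    (-Complex.I)).congr_deriv ?_
  have hκu : κ / (u η ^ 2 + κ) = 1 - u η / (u η ^ 2 + κ) * u η := by field_simp; ring
  rw [vdcRemainder, hκu, Complex.ofReal_sub, Complex.ofReal_one, Complex.ofReal_mul]
  linear_combination
    (-(Complex.exp (Complex.I * θ η) * (u η / (u η ^ 2 + κ) : ℝ) * u η)) * Complex.I_sq

lemma norm_vdcRemainder_le {u v : ℝ} (hκ : 0 < κ) (hκv : κ ≤ v) :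
    ‖vdcRemainder κ u v‖ ≤ 2 * (v / (u ^ 2 + κ)) := by
  have hden : 0 < u ^ 2 + κ := by positivity
  have hv : 0 < v := hκ.trans_le hκv
  have h₁ : |κ / (u ^ 2 + κ)| ≤ v / (u ^ 2 + κ) := by
    rw [abs_of_pos (div_pos hκ hden)]
    gcongr
  have h₂ : |v * (κ - u ^ 2) / (u ^ 2 + κ) ^ 2| ≤ v / (u ^ 2 + κ) := by
    have : |κ - u ^ 2| ≤ u ^ 2 + κ := abs_le.2 ⟨by linarith, by linarith [sq_nonneg u]⟩
    calc |v * (κ - u ^ 2) / (u ^ 2 + κ) ^ 2| = v * |κ - u ^ 2| / (u ^ 2 + κ) ^ 2 := by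
          rw [abs_div, abs_mul, abs_of_pos hv, abs_of_pos (pow_pos hden 2)]
      _ ≤ v * (u ^ 2 + κ) / (u ^ 2 + κ) ^ 2 := by gcongr
      _ = v / (u ^ 2 + κ) := by field_simp
  rw [two_mul]
  refine (norm_add_le _ _).trans (add_le_add ?_ ?_)
  · rwa [Complex.norm_real]
  · rwa [norm_mul, Complex.norm_I, one_mul, Complex.norm_real]

lemma continuousOn_vdcRemainder {s : Set ℝ} (hκ : 0 < κ) (hu : ContinuousOn u s)
    (hv : ContinuousOn v s) : ContinuousOn (fun η ↦ vdcRemainder κ (u η) (v η)) s := by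
  unfold vdcRemainder
  have hden : ∀ η ∈ s, u η ^ 2 + κ ≠ 0 := fun η _ ↦ by positivity
  have hden₂ : ∀ η ∈ s, (u η ^ 2 + κ) ^ 2 ≠ 0 := fun η hη ↦ pow_ne_zero 2 (hden η hη)
  have : ContinuousOn (fun η ↦ κ / (u η ^ 2 + κ)) s := by fun_prop (disch := assumption)
  have : ContinuousOn (fun η ↦ v η * (κ - u η ^ 2) / (u η ^ 2 + κ) ^ 2) s := by
    fun_prop (disch := assumption)
  fun_prop

lemma integral_deriv_div_sq_add_le (hαβ : α ≤ β) (hκ : 0 < κ)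
    (hu : ∀ η ∈ Icc α β, HasDerivAt u (v η) η)
    (hint : IntervalIntegrable (fun η ↦ v η / (u η ^ 2 + κ)) volume α β) :
    ∫ η in α..β, v η / (u η ^ 2 + κ) ≤ π / √κ := by
  have harctan : ∀ η ∈ uIcc α β,
      HasDerivAt (fun η ↦ arctan (u η / √κ) / √κ) (v η / (u η ^ 2 + κ)) η := fun η hη ↦ by
    rw [uIcc_of_le hαβ] at hη
    refine (((hu η hη).div_const (√κ)).arctan.div_const (√κ)).congr_deriv ?_
    have hden : 1 + (u η / √κ) ^ 2 = (u η ^ 2 + κ) / κ := by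
      rw [div_pow, sq_sqrt hκ.le]; field_simp; ring
    have : 0 < u η ^ 2 + κ := by positivity
    rw [hden]
    field_simp
    rw [sq_sqrt hκ.le, mul_comm]
  rw [intervalIntegral.integral_eq_sub_of_hasDerivAt harctan hint, ← sub_div]
  gcongr
  linarith [arctan_lt_pi_div_two (u β / √κ), neg_pi_div_two_lt_arctan (u α / √κ)]

lemma abs_div_sq_add_le (hκ : 0 < κ) (x : ℝ) : |x / (x ^ 2 + κ)| ≤ 1 / (2 * √κ) := by
  rw [abs_div, abs_of_pos (by positivity : 0 < x ^ 2 + κ), div_le_div_iff₀ (by positivity)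
    (by positivity)]
  nlinarith [sq_nonneg (|x| - √κ), sq_sqrt hκ.le, sq_abs x]

lemma norm_integral_exp_le_of_le_deriv2 (hαβ : α ≤ β) (hκ : 0 < κ)
    (hθ : ∀ η ∈ Icc α β, HasDerivAt θ (u η) η) (hu : ∀ η ∈ Icc α β, HasDerivAt u (v η) η)
    (hv : ContinuousOn v (Icc α β)) (hκv : ∀ η ∈ Icc α β, κ ≤ v η) :
    ‖∫ η in α..β, Complex.exp (Complex.I * θ η)‖ ≤ (2 * π + 1) / √κ := by
  set E : ℝ → ℂ := fun η ↦ Complex.exp (Complex.I * θ η)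
  set P : ℝ → ℂ := fun η ↦ -Complex.I * ((u η / (u η ^ 2 + κ) : ℝ) * E η)
  set R : ℝ → ℂ := fun η ↦ E η * vdcRemainder κ (u η) (v η)
  have hEnorm : ∀ η, ‖E η‖ = 1 := fun η ↦ Complex.norm_exp_I_mul_ofReal _
  have hPnorm : ∀ η, ‖P η‖ ≤ 1 / (2 * √κ) := fun η ↦ by
    simpa only [P, norm_mul, norm_neg, Complex.norm_I, one_mul, hEnorm, mul_one,
      Complex.norm_real, norm_eq_abs] using abs_div_sq_add_le hκ (u η)
  have hR : ∀ η ∈ Icc α β, ‖R η‖ ≤ 2 * (v η / (u η ^ 2 + κ)) := fun η hη ↦ by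
    simpa only [R, norm_mul, hEnorm, one_mul] using norm_vdcRemainder_le hκ (hκv η hη)
  have hIcc := uIcc_of_le hαβ
  have hcu : ContinuousOn u (Icc α β) := HasDerivAt.continuousOn hu
  have hcE : ContinuousOn E (Icc α β) := by
    have := HasDerivAt.continuousOn hθ
    fun_prop
  have hEint : IntervalIntegrable E volume α β :=
    ContinuousOn.intervalIntegrable (hIcc ▸ hcE)
  have hRint : IntervalIntegrable R volume α β :=
    ContinuousOn.intervalIntegrable (hIcc ▸ hcE.mul (continuousOn_vdcRemainder hκ hcu hv))
  have hint : IntervalIntegrable (fun η ↦ v η / (u η ^ 2 + κ)) volume α β :=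
    ContinuousOn.intervalIntegrable <| hIcc ▸
      hv.div ((hcu.pow 2).add continuousOn_const) fun η _ ↦ by positivity
  have hsplit : ∫ η in α..β, E η = (P β - P α) + ∫ η in α..β, R η := by
    have hderiv : ∀ η ∈ uIcc α β, HasDerivAt P (E η - R η) η := fun η hη ↦
      hasDerivAt_exp_mul_div_sq_add hκ (hθ η (hIcc ▸ hη)) (hu η (hIcc ▸ hη))
    rw [← intervalIntegral.integral_eq_sub_of_hasDerivAt hderiv (hEint.sub hRint),
      intervalIntegral.integral_sub hEint hRint, sub_add_cancel]
  have hRle : ‖∫ η in α..β, R η‖ ≤ 2 * (π / √κ) := by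
    refine (intervalIntegral.norm_integral_le_of_norm_le hαβ
      (.of_forall fun η hη ↦ hR η (Ioc_subset_Icc_self hη)) (hint.const_mul 2)).trans ?_
    rw [intervalIntegral.integral_const_mul]
    gcongr
    exact integral_deriv_div_sq_add_le hαβ hκ hu hint
  calc ‖∫ η in α..β, E η‖ ≤ (1 / (2 * √κ) + 1 / (2 * √κ)) + 2 * (π / √κ) := by
        rw [hsplit]
        exact (norm_add_le _ _).trans (add_le_add ((norm_sub_le _ _).trans
          (add_le_add (hPnorm β) (hPnorm α))) hRle)
    _ = (2 * π + 1) / √κ := by have := sqrt_pos.2 hκ; field_simp; ring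

lemma forall_le_or_forall_le_neg_of_le_abs {s : Set ℝ} (hs : IsPreconnected s) (hκ : 0 < κ)
    (hv : ContinuousOn v s) (hκv : ∀ η ∈ s, κ ≤ |v η|) :
    (∀ η ∈ s, κ ≤ v η) ∨ ∀ η ∈ s, κ ≤ -v η := by
  by_contra! ⟨⟨x, hx, hxv⟩, y, hy, hyv⟩
  have hvx : v x ≤ 0 := by
    by_contra! h
    exact hxv.not_ge (abs_of_pos h ▸ hκv x hx)
  have hvy : 0 ≤ v y := by
    by_contra! h
    exact hyv.not_ge (abs_of_neg h ▸ hκv y hy)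
  obtain ⟨z, hz, hvz⟩ := hs.intermediate_value hx hy hv ⟨hvx, hvy⟩
  exact hκ.not_ge (by simpa [hvz] using hκv z hz)

theorem norm_integral_exp_le_of_le_abs_deriv2 (hαβ : α ≤ β) (hκ : 0 < κ)
    (hθ : ∀ η ∈ Icc α β, HasDerivAt θ (u η) η) (hu : ∀ η ∈ Icc α β, HasDerivAt u (v η) η)
    (hv : ContinuousOn v (Icc α β)) (hκv : ∀ η ∈ Icc α β, κ ≤ |v η|) :
    ‖∫ η in α..β, Complex.exp (Complex.I * θ η)‖ ≤ (2 * π + 1) / √κ := by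
  rcases forall_le_or_forall_le_neg_of_le_abs isPreconnected_Icc hκ hv hκv with h | h
  · exact norm_integral_exp_le_of_le_deriv2 hαβ hκ hθ hu hv h
  · have hconj : ∫ η in α..β, Complex.exp (Complex.I * (-θ η : ℝ))
        = (starRingEnd ℂ) (∫ η in α..β, Complex.exp (Complex.I * θ η)) := by
      simp only [intervalIntegral.integral_of_le hαβ, ← integral_conj, ← Complex.exp_conj, map_mul,
        Complex.conj_I, Complex.conj_ofReal, Complex.ofReal_neg, mul_neg, neg_mul]
    rw [← Complex.norm_conj, ← hconj]
    exact norm_integral_exp_le_of_le_deriv2 hαβ hκ (fun η hη ↦ (hθ η hη).neg)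
      (fun η hη ↦ (hu η hη).neg) hv.neg h

theorem norm_integral_exp_mul_le_of_le_abs_deriv2 {φ φ' : ℝ → ℂ} (hαβ : α ≤ β) (hκ : 0 < κ)
    (hθ : ∀ η ∈ Icc α β, HasDerivAt θ (u η) η) (hu : ∀ η ∈ Icc α β, HasDerivAt u (v η) η)
    (hv : ContinuousOn v (Icc α β)) (hκv : ∀ η ∈ Icc α β, κ ≤ |v η|)
    (hφ : ∀ η ∈ Icc α β, HasDerivAt φ (φ' η) η) (hφ' : ContinuousOn φ' (Icc α β)) :
    ‖∫ η in α..β, Complex.exp (Complex.I * θ η) * φ η‖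
      ≤ (2 * π + 1) / √κ * (‖φ β‖ + ∫ η in α..β, ‖φ' η‖) := by
  set E : ℝ → ℂ := fun η ↦ Complex.exp (Complex.I * θ η)
  set F : ℝ → ℂ := fun η ↦ ∫ ζ in α..η, E ζ
  have hIcc := uIcc_of_le hαβ
  have hcE : ContinuousOn E (Icc α β) := by
    have := HasDerivAt.continuousOn hθ
    fun_prop
  have hEint : IntervalIntegrable E volume α β := ContinuousOn.intervalIntegrable (hIcc ▸ hcE)
  have hφint : IntervalIntegrable φ' volume α β := ContinuousOn.intervalIntegrable (hIcc ▸ hφ')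
  have hF : ∀ η ∈ Icc α β, ‖F η‖ ≤ (2 * π + 1) / √κ := fun η hη ↦ by
    have hsub : Icc α η ⊆ Icc α β := Icc_subset_Icc_right hη.2
    exact norm_integral_exp_le_of_le_abs_deriv2 hη.1 hκ (fun ζ hζ ↦ hθ ζ (hsub hζ))
      (fun ζ hζ ↦ hu ζ (hsub hζ)) (hv.mono hsub) fun ζ hζ ↦ hκv ζ (hsub hζ)
  have hcF : ContinuousOn F (uIcc α β) :=
    intervalIntegral.continuousOn_primitive_interval' hEint left_mem_uIcc
  have hF' : ∀ η ∈ Ioo (min α β) (max α β), HasDerivAt F (E η) η := fun η hη ↦ by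
    rw [min_eq_left hαβ, max_eq_right hαβ] at hη
    have hnhds : Icc α β ∈ 𝓝 η := Icc_mem_nhds hη.1 hη.2
    refine intervalIntegral.integral_hasDerivAt_right
      (hEint.mono_set (hIcc ▸ uIcc_of_le hη.1.le ▸ Icc_subset_Icc_right hη.2.le))
      ⟨_, hnhds, hcE.aestronglyMeasurable measurableSet_Icc⟩ (hcE.continuousAt hnhds)
  have hparts : ∫ η in α..β, E η * φ η = F β * φ β - ∫ η in α..β, F η * φ' η := by
    have := intervalIntegral.integral_mul_deriv_eq_deriv_mul_of_hasDerivAt hcF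
      (hIcc ▸ HasDerivAt.continuousOn hφ) hF'
      (fun η hη ↦ hφ η (by
        rw [min_eq_left hαβ, max_eq_right hαβ] at hη; exact Ioo_subset_Icc_self hη)) hEint hφint
    simp only [this, F, intervalIntegral.integral_same, zero_mul, sub_zero, sub_sub_cancel]
  have hrem : ‖∫ η in α..β, F η * φ' η‖ ≤ (2 * π + 1) / √κ * ∫ η in α..β, ‖φ' η‖ := by
    rw [← intervalIntegral.integral_const_mul]
    refine intervalIntegral.norm_integral_le_of_norm_le hαβ (.of_forall fun η hη ↦ ?_)
      (hφint.norm.const_mul _)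
    rw [norm_mul]
    gcongr
    exact hF η (Ioc_subset_Icc_self hη)
  rw [hparts, mul_add]
  refine (norm_sub_le _ _).trans (add_le_add ?_ hrem)
  rw [norm_mul]
  gcongr
  exact hF β (right_mem_Icc.2 hαβ)

end VanDerCorput

section NonstationaryPhase

variable {p q r w : ℝ → ℝ} {ψ ψ' : ℝ → ℂ} {α β y : ℝ}

lemma integral_exp_mul_eq_of_deriv_ne_zero (hαβ : α ≤ β) (hy : y ≠ 0)
    (hp : ∀ η ∈ Icc α β, HasDerivAt p (q η) η) (hq : ∀ η ∈ Icc α β, HasDerivAt q (r η) η)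
    (hr : ContinuousOn r (Icc α β)) (hq0 : ∀ η ∈ Icc α β, q η ≠ 0)
    (hψ : ∀ η ∈ Icc α β, HasDerivAt ψ (ψ' η) η) (hψ' : ContinuousOn ψ' (Icc α β))
    (hψα : ψ α = 0) (hψβ : ψ β = 0) :
    ∫ η in α..β, Complex.exp (Complex.I * (y * p η : ℝ)) * ψ η
      = Complex.I / y * ∫ η in α..β, Complex.exp (Complex.I * (y * p η : ℝ))
          * (ψ' η / q η - ψ η * r η / q η ^ 2) := by
  set E : ℝ → ℂ := fun η ↦ Complex.exp (Complex.I * (y * p η : ℝ))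
  have hIcc := uIcc_of_le hαβ
  have hqc : ∀ η ∈ Icc α β, (q η : ℂ) ≠ 0 := fun η hη ↦ by exact_mod_cast hq0 η hη
  have hderiv : ∀ η ∈ uIcc α β, HasDerivAt (fun η ↦ E η * (ψ η / q η))
      (Complex.I * y * (E η * ψ η) + E η * (ψ' η / q η - ψ η * r η / q η ^ 2)) η := by
    intro η hη
    rw [hIcc] at hη
    have hE : HasDerivAt E (E η * (Complex.I * (y * q η : ℝ))) η :=
      (((hp η hη).const_mul y).ofReal_comp.const_mul Complex.I).cexp
    refine (hE.mul ((hψ η hη).fun_div (hq η hη).ofReal_comp (hqc η hη))).congr_deriv ?_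
    have := hqc η hη
    push_cast
    field_simp
  have hcp : ContinuousOn p (Icc α β) := HasDerivAt.continuousOn hp
  have hcq : ContinuousOn (fun η ↦ (q η : ℂ)) (Icc α β) :=
    Complex.continuous_ofReal.comp_continuousOn (HasDerivAt.continuousOn hq)
  have hcr : ContinuousOn (fun η ↦ (r η : ℂ)) (Icc α β) :=
    Complex.continuous_ofReal.comp_continuousOn hr
  have hcψ : ContinuousOn ψ (Icc α β) := HasDerivAt.continuousOn hψ
  have hcE : ContinuousOn E (Icc α β) := by fun_prop
  have hint₁ : IntervalIntegrable (fun η ↦ Complex.I * y * (E η * ψ η)) volume α β :=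
    ContinuousOn.intervalIntegrable <| hIcc ▸ by fun_prop
  have hint₂ : IntervalIntegrable (fun η ↦ E η * (ψ' η / q η - ψ η * r η / q η ^ 2)) volume α β :=
    ContinuousOn.intervalIntegrable <| hIcc ▸ hcE.mul ((hψ'.div hcq hqc).sub
      ((hcψ.mul hcr).div (hcq.pow 2) fun η hη ↦ pow_ne_zero 2 (hqc η hη)))
  have hzero := intervalIntegral.integral_eq_sub_of_hasDerivAt hderiv (hint₁.add hint₂)
  rw [intervalIntegral.integral_add hint₁ hint₂, intervalIntegral.integral_const_mul, hψα, hψβ,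
    zero_div, zero_div, mul_zero, mul_zero, sub_zero] at hzero
  have hyc : (y : ℂ) ≠ 0 := by exact_mod_cast hy
  rw [div_mul_eq_mul_div, eq_div_iff hyc]
  linear_combination (-Complex.I) * hzero + y * (∫ η in α..β, E η * ψ η) * Complex.I_sq

/-- The amplitude produced by two integrations by parts against a phase `y p`: it is `L (L φ)` for
`L ψ = (ψ / q)'`, where `q = p'` and the remaining arguments are the values of `q'`, `q''`, `φ`,
`φ'` and `φ''`. -/
def ibpAmplitude (q r w : ℝ) (φ φ₁ φ₂ : ℂ) : ℂ :=
  φ₂ / q ^ 2 - 3 * φ₁ * r / q ^ 3 - φ * w / q ^ 3 + 3 * φ * r ^ 2 / q ^ 4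

variable {φ φ₁ φ₂ : ℝ → ℂ}

lemma integral_exp_mul_eq_ibpAmplitude (hαβ : α ≤ β) (hy : y ≠ 0)
    (hp : ∀ η ∈ Icc α β, HasDerivAt p (q η) η) (hq : ∀ η ∈ Icc α β, HasDerivAt q (r η) η)
    (hr : ∀ η ∈ Icc α β, HasDerivAt r (w η) η) (hw : ContinuousOn w (Icc α β))
    (hq0 : ∀ η ∈ Icc α β, q η ≠ 0) (hφ : ∀ η ∈ Icc α β, HasDerivAt φ (φ₁ η) η)
    (hφ₁ : ∀ η ∈ Icc α β, HasDerivAt φ₁ (φ₂ η) η) (hφ₂ : ContinuousOn φ₂ (Icc α β))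
    (hφα : φ α = 0) (hφβ : φ β = 0) (hφ₁α : φ₁ α = 0) (hφ₁β : φ₁ β = 0) :
    ∫ η in α..β, Complex.exp (Complex.I * (y * p η : ℝ)) * φ η
      = (Complex.I / y) ^ 2 * ∫ η in α..β, Complex.exp (Complex.I * (y * p η : ℝ))
          * ibpAmplitude (q η) (r η) (w η) (φ η) (φ₁ η) (φ₂ η) := by
  set ψ : ℝ → ℂ := fun η ↦ φ₁ η / q η - φ η * r η / q η ^ 2
  set ψ' : ℝ → ℂ := fun η ↦ φ₂ η / q η - 2 * φ₁ η * r η / q η ^ 2 - φ η * w η / q η ^ 2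
    + 2 * φ η * r η ^ 2 / q η ^ 3
  have hqc : ∀ η ∈ Icc α β, (q η : ℂ) ≠ 0 := fun η hη ↦ by exact_mod_cast hq0 η hη
  have hψ : ∀ η ∈ Icc α β, HasDerivAt ψ (ψ' η) η := fun η hη ↦ by
    have hqη := (hq η hη).ofReal_comp
    have := hqc η hη
    refine (((hφ₁ η hη).fun_div hqη this).fun_sub (((hφ η hη).fun_mul (hr η hη).ofReal_comp).fun_div
      (hqη.fun_pow 2) (pow_ne_zero 2 this))).congr_deriv ?_
    simp only [ψ']
    field_simp
    ring
  have hψ'c : ContinuousOn ψ' (Icc α β) := by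
    have hcq : ContinuousOn (fun η ↦ (q η : ℂ)) (Icc α β) :=
      Complex.continuous_ofReal.comp_continuousOn (HasDerivAt.continuousOn hq)
    have hcr : ContinuousOn (fun η ↦ (r η : ℂ)) (Icc α β) :=
      Complex.continuous_ofReal.comp_continuousOn (HasDerivAt.continuousOn hr)
    have hcφ : ContinuousOn φ (Icc α β) := HasDerivAt.continuousOn hφ
    have hcφ₁ : ContinuousOn φ₁ (Icc α β) := HasDerivAt.continuousOn hφ₁
    have hq2 : ∀ η ∈ Icc α β, (q η : ℂ) ^ 2 ≠ 0 := fun η hη ↦ pow_ne_zero 2 (hqc η hη)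
    have hq3 : ∀ η ∈ Icc α β, (q η : ℂ) ^ 3 ≠ 0 := fun η hη ↦ pow_ne_zero 3 (hqc η hη)
    fun_prop (disch := assumption)
  rw [integral_exp_mul_eq_of_deriv_ne_zero hαβ hy hp hq (HasDerivAt.continuousOn hr) hq0 hφ
      (HasDerivAt.continuousOn hφ₁) hφα hφβ,
    integral_exp_mul_eq_of_deriv_ne_zero hαβ hy hp hq (HasDerivAt.continuousOn hr) hq0 hψ hψ'c
      (by simp [ψ, hφα, hφ₁α]) (by simp [ψ, hφβ, hφ₁β]), ← mul_assoc, ← sq]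
  congr 1
  refine intervalIntegral.integral_congr fun η hη ↦ ?_
  have := hqc η (uIcc_of_le hαβ ▸ hη)
  simp only [ψ, ψ', ibpAmplitude]
  field_simp
  ring

theorem norm_integral_exp_mul_le_of_deriv_ne_zero {B : ℝ} (hαβ : α ≤ β) (hy : y ≠ 0)
    (hp : ∀ η ∈ Icc α β, HasDerivAt p (q η) η) (hq : ∀ η ∈ Icc α β, HasDerivAt q (r η) η)
    (hr : ∀ η ∈ Icc α β, HasDerivAt r (w η) η) (hw : ContinuousOn w (Icc α β))
    (hq0 : ∀ η ∈ Icc α β, q η ≠ 0) (hφ : ∀ η ∈ Icc α β, HasDerivAt φ (φ₁ η) η)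
    (hφ₁ : ∀ η ∈ Icc α β, HasDerivAt φ₁ (φ₂ η) η) (hφ₂ : ContinuousOn φ₂ (Icc α β))
    (hφα : φ α = 0) (hφβ : φ β = 0) (hφ₁α : φ₁ α = 0) (hφ₁β : φ₁ β = 0)
    (hB : ∀ η ∈ Icc α β, ‖ibpAmplitude (q η) (r η) (w η) (φ η) (φ₁ η) (φ₂ η)‖ ≤ B) :
    ‖∫ η in α..β, Complex.exp (Complex.I * (y * p η : ℝ)) * φ η‖ ≤ B * (β - α) / y ^ 2 := by
  rw [integral_exp_mul_eq_ibpAmplitude hαβ hy hp hq hr hw hq0 hφ hφ₁ hφ₂ hφα hφβ hφ₁α hφ₁β,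
    norm_mul, norm_pow, norm_div, Complex.norm_I, Complex.norm_real, div_pow, one_pow,
    norm_eq_abs, sq_abs, one_div_mul_eq_div]
  gcongr
  rw [← abs_of_nonneg (sub_nonneg.2 hαβ)]
  refine intervalIntegral.norm_integral_le_of_norm_le_const fun η hη ↦ ?_
  rw [norm_mul, Complex.norm_exp_I_mul_ofReal, one_mul]
  exact hB η (uIcc_of_le hαβ ▸ uIoc_subset_uIcc hη)

end NonstationaryPhase

section OscIntegral

/-- The oscillatory integral `∫ e^{i (x ξ + t p(ξ))} g(ξ) dξ` with phase function `p`. It serves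
both as the extension operator (`g = f̂`) and, with `g` a frequency cutoff, as its kernel. -/
def oscIntegral (p : ℝ → ℝ) (g : ℝ → ℂ) (x t : ℝ) : ℂ :=
  ∫ ξ, Complex.exp (Complex.I * (x * ξ + t * p ξ : ℝ)) * g ξ

variable {p : ℝ → ℝ} {g : ℝ → ℂ}

lemma norm_oscIntegral_le (x t : ℝ) : ‖oscIntegral p g x t‖ ≤ ∫ ξ, ‖g ξ‖ := by
  refine (norm_integral_le_integral_norm _).trans_eq (integral_congr_ae (.of_forall fun ξ ↦ ?_))
  simp only [norm_mul, Complex.norm_exp_I_mul_ofReal, one_mul]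

lemma continuous_oscIntegral (hp : Measurable p) (hg : Integrable g) :
    Continuous fun z : ℝ × ℝ ↦ oscIntegral p g z.1 z.2 := by
  refine continuous_of_dominated (bound := fun ξ ↦ ‖g ξ‖) (fun z ↦ ?_)
    (fun z ↦ .of_forall fun ξ ↦ ?_) hg.norm (.of_forall fun ξ ↦ by fun_prop)
  · exact (by fun_prop : Measurable fun ξ ↦ Complex.exp (Complex.I * (z.1 * ξ + z.2 * p ξ : ℝ)))
      |>.aestronglyMeasurable.mul hg.aestronglyMeasurable
  · rw [norm_mul, Complex.norm_exp_I_mul_ofReal, one_mul]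

lemma oscIntegral_comp_mul_left {c : ℝ} (hc : c ≠ 0) (x t : ℝ) :
    oscIntegral p (fun ξ ↦ g (c * ξ)) x t
      = |c⁻¹| * oscIntegral (fun ξ ↦ p (c⁻¹ * ξ)) g (c⁻¹ * x) t := by
  have := Measure.integral_comp_mul_left
    (fun ξ ↦ Complex.exp (Complex.I * (c⁻¹ * x * ξ + t * p (c⁻¹ * ξ) : ℝ)) * g ξ) c
  rw [Complex.real_smul] at this
  rw [oscIntegral, oscIntegral, ← this]
  refine integral_congr_ae (.of_forall fun ξ ↦ ?_)
  have hx : c⁻¹ * x * (c * ξ) = x * ξ := by field_simp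
  simp only [hx, inv_mul_cancel_left₀ hc]

end OscIntegral

section PowerPhase

/-- The phase function `|ξ| ^ a` of the operator `S^a`. -/
def powerPhase (a ξ : ℝ) : ℝ := |ξ| ^ a

lemma measurable_powerPhase (a : ℝ) : Measurable (powerPhase a) := by
  unfold powerPhase
  fun_prop

lemma powerPhase_mul (a c ξ : ℝ) : powerPhase a (c * ξ) = |c| ^ a * powerPhase a ξ := by
  rw [powerPhase, powerPhase, abs_mul, mul_rpow (abs_nonneg c) (abs_nonneg ξ)]

variable {a α β : ℝ} {φ : ℝ → ℂ}

lemma oscIntegral_powerPhase_eq_intervalIntegral (hα : 0 < α) (hαβ : α ≤ β)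
    (hsupp : tsupport φ ⊆ Ioo α β) (y l : ℝ) :
    oscIntegral (powerPhase a) φ y l
      = ∫ η in α..β, Complex.exp (Complex.I * (y * η + l * η ^ a : ℝ)) * φ η := by
  rw [oscIntegral, intervalIntegral.integral_of_le hαβ,
    ← setIntegral_eq_integral_of_forall_compl_eq_zero (s := Ioc α β)]
  · refine setIntegral_congr_fun measurableSet_Ioc fun η hη ↦ ?_
    simp only [powerPhase, abs_of_pos (hα.trans hη.1)]
  · intro η hη
    rw [image_eq_zero_of_notMem_tsupport fun h ↦ hη (Ioo_subset_Ioc_self (hsupp h)), mul_zero]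

lemma hasDerivAt_rpow_const_of_mem_Icc (hα : 0 < α) {η : ℝ} (hη : η ∈ Icc α β) (b : ℝ) :
    HasDerivAt (fun η ↦ η ^ b) (b * η ^ (b - 1)) η :=
  hasDerivAt_rpow_const (.inl (hα.trans_le hη.1).ne')

lemma continuousOn_rpow_const_Icc (hα : 0 < α) (b : ℝ) :
    ContinuousOn (fun η : ℝ ↦ η ^ b) (Icc α β) :=
  continuousOn_id.rpow_const fun _ hη ↦ .inl (hα.trans_le hη.1).ne'

lemma exists_norm_oscIntegral_powerPhase_le_div_sqrt (ha : 0 < a) (ha1 : a ≠ 1) (hα : 0 < α)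
    (hαβ : α ≤ β) (hφ : ContDiff ℝ 1 φ) (hsupp : tsupport φ ⊆ Ioo α β) :
    ∃ C, ∀ y l : ℝ, l ≠ 0 → ‖oscIntegral (powerPhase a) φ y l‖ ≤ C / √|l| := by
  have hpow := continuousOn_rpow_const_Icc (β := β) hα (a - 1 - 1)
  obtain ⟨c, hc, hcle⟩ : ∃ c > 0, ∀ η ∈ Icc α β, c ≤ |a * ((a - 1) * η ^ (a - 1 - 1))| := by
    obtain ⟨η₀, hη₀, hmin⟩ := isCompact_Icc.exists_isMinOn (nonempty_Icc.2 hαβ)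
      ((continuousOn_const.mul (continuousOn_const.mul hpow)).abs
        (f := fun η ↦ a * ((a - 1) * η ^ (a - 1 - 1))))
    refine ⟨_, abs_pos.2 ?_, fun η hη ↦ hmin hη⟩
    have := rpow_pos_of_pos (hα.trans_le hη₀.1) (a - 1 - 1)
    exact mul_ne_zero ha.ne' (mul_ne_zero (sub_ne_zero.2 ha1) this.ne')
  refine ⟨(2 * π + 1) / √c * (‖φ β‖ + ∫ η in α..β, ‖deriv φ η‖), fun y l hl ↦ ?_⟩
  rw [oscIntegral_powerPhase_eq_intervalIntegral hα hαβ hsupp]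
  have := abs_pos.2 hl
  refine (norm_integral_exp_mul_le_of_le_abs_deriv2 (u := fun η ↦ y + l * (a * η ^ (a - 1)))
    (v := fun η ↦ l * (a * ((a - 1) * η ^ (a - 1 - 1)))) (κ := c * |l|) hαβ (by positivity)
    (fun η hη ↦ ?_) (fun η hη ↦ ?_) ?_ (fun η hη ↦ ?_)
    (fun η _ ↦ (hφ.differentiable one_ne_zero η).hasDerivAt)
    (hφ.continuous_deriv le_rfl).continuousOn).trans_eq ?_
  · simpa using ((hasDerivAt_id' η).const_mul y).fun_add
      ((hasDerivAt_rpow_const_of_mem_Icc hα hη a).const_mul l)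
  · exact (((hasDerivAt_rpow_const_of_mem_Icc hα hη (a - 1)).const_mul a).const_mul l).const_add y
  · exact continuousOn_const.mul (continuousOn_const.mul (continuousOn_const.mul hpow))
  · rw [abs_mul, mul_comm c]
    gcongr
    exact hcle η hη
  · rw [sqrt_mul hc.le]
    field_simp

lemma exists_norm_ibpAmplitude_powerPhase_le (hα : 0 < α) (hφ : ContDiff ℝ 2 φ) {m : ℝ}
    (hm : ∀ η ∈ Icc α β, m * |a * η ^ (a - 1)| ≤ 1 / 2) :
    ∃ C, ∀ μ : ℝ, |μ| ≤ m → ∀ η ∈ Icc α β, 1 + μ * (a * η ^ (a - 1)) ≠ 0 ∧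
      ‖ibpAmplitude (1 + μ * (a * η ^ (a - 1))) (μ * (a * ((a - 1) * η ^ (a - 1 - 1))))
        (μ * (a * ((a - 1) * ((a - 1 - 1) * η ^ (a - 1 - 1 - 1)))))
        (φ η) (deriv φ η) (deriv (deriv φ) η)‖ ≤ C := by
  have hne : ∀ μ : ℝ, |μ| ≤ m → ∀ η ∈ Icc α β, 1 + μ * (a * η ^ (a - 1)) ≠ 0 :=
    fun μ hμ η hη ↦ by
      have : |μ * (a * η ^ (a - 1))| ≤ 1 / 2 := by
        rw [abs_mul]
        exact (mul_le_mul_of_nonneg_right hμ (abs_nonneg _)).trans (hm η hη)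
      linarith [(abs_le.1 this).1]
  have hpow : ∀ b : ℝ, ContinuousOn (fun z : ℝ × ℝ ↦ z.2 ^ b) (Icc (-m) m ×ˢ Icc α β) :=
    fun b ↦ continuousOn_snd.rpow_const fun z hz ↦ .inl (hα.trans_le hz.2.1).ne'
  have := hpow (a - 1)
  have := hpow (a - 1 - 1)
  have := hpow (a - 1 - 1 - 1)
  have hφ₁ : ContDiff ℝ 1 (deriv φ) := hφ.deriv'
  have hc₀ := hφ.continuous
  have hc₁ := hφ₁.continuous
  have := hφ₁.continuous_deriv le_rfl
  have hq : ∀ k, ∀ z ∈ Icc (-m) m ×ˢ Icc α β,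
      ((1 + z.1 * (a * z.2 ^ (a - 1)) : ℝ) : ℂ) ^ k ≠ 0 := fun k z hz ↦
    pow_ne_zero k (by exact_mod_cast hne z.1 (abs_le.2 hz.1) z.2 hz.2)
  have hq2 := hq 2
  have hq3 := hq 3
  have hq4 := hq 4
  obtain ⟨C, hC⟩ := (isCompact_Icc.prod isCompact_Icc).exists_bound_of_continuousOn
    (s := Icc (-m) m ×ˢ Icc α β)
    (f := fun z : ℝ × ℝ ↦ ibpAmplitude (1 + z.1 * (a * z.2 ^ (a - 1)))
      (z.1 * (a * ((a - 1) * z.2 ^ (a - 1 - 1))))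
      (z.1 * (a * ((a - 1) * ((a - 1 - 1) * z.2 ^ (a - 1 - 1 - 1)))))
      (φ z.2) (deriv φ z.2) (deriv (deriv φ) z.2))
    (by unfold ibpAmplitude; fun_prop (disch := assumption))
  exact ⟨C, fun μ hμ η hη ↦ ⟨hne μ hμ η hη, hC (μ, η) ⟨abs_le.1 hμ, hη⟩⟩⟩

/- Dividing the phase by `y` leaves `η + μ η ^ a` with `μ = l / y` in a compact interval on which
this has no stationary point, so the amplitude after two integrations by parts is bounded
uniformly in `y` and `l`. -/
lemma exists_norm_oscIntegral_powerPhase_le_div_sq (hα : 0 < α)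
    (hαβ : α ≤ β) (hφ : ContDiff ℝ 2 φ) (hsupp : tsupport φ ⊆ Ioo α β) :
    ∃ M > 0, ∃ C, ∀ y l : ℝ, y ≠ 0 → M * |l| ≤ |y| →
      ‖oscIntegral (powerPhase a) φ y l‖ ≤ C / y ^ 2 := by
  obtain ⟨N, hN⟩ := isCompact_Icc.exists_bound_of_continuousOn
    (continuousOn_const.mul (continuousOn_rpow_const_Icc hα (a - 1)) :
      ContinuousOn (fun η : ℝ ↦ a * η ^ (a - 1)) (Icc α β))
  set M := 2 * (|N| + 1)
  have hM : 0 < M := by positivity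
  obtain ⟨C, hC⟩ := exists_norm_ibpAmplitude_powerPhase_le (a := a) (m := M⁻¹) hα hφ fun η hη ↦ by
    have : |a * η ^ (a - 1)| ≤ N := hN η hη
    have hM2 : M * (1 / 2) = |N| + 1 := by simp only [M]; ring
    rw [inv_mul_le_iff₀ hM, hM2]
    linarith [le_abs_self N]
  have hφ₁ : ContDiff ℝ 1 (deriv φ) := hφ.deriv'
  refine ⟨M, hM, C * (β - α), fun y l hy hMl ↦ ?_⟩
  have hμ : |l / y| ≤ M⁻¹ := by
    rw [abs_div, div_le_iff₀ (abs_pos.2 hy), le_inv_mul_iff₀ hM]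
    exact hMl
  have hα' : α ∉ tsupport φ := fun h ↦ (hsupp h).1.false
  have hβ' : β ∉ tsupport φ := fun h ↦ (hsupp h).2.false
  have hphase : ∀ η : ℝ, y * η + l * η ^ a = y * (η + l / y * η ^ a) := fun η ↦ by field_simp
  rw [oscIntegral_powerPhase_eq_intervalIntegral hα hαβ hsupp]
  simp only [hphase]
  refine norm_integral_exp_mul_le_of_deriv_ne_zero hαβ hy
    (fun η hη ↦ (hasDerivAt_id' η).fun_add
      ((hasDerivAt_rpow_const_of_mem_Icc hα hη a).const_mul (l / y)))
    (fun η hη ↦ (((hasDerivAt_rpow_const_of_mem_Icc hα hη (a - 1)).const_mul a).const_mul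
      (l / y)).const_add 1)
    (fun η hη ↦ (((hasDerivAt_rpow_const_of_mem_Icc hα hη (a - 1 - 1)).const_mul (a - 1)).const_mul
      a).const_mul (l / y)) ?_
    (fun η hη ↦ (hC _ hμ η hη).1) (fun η _ ↦ (hφ.differentiable two_ne_zero η).hasDerivAt)
    (fun η _ ↦ (hφ₁.differentiable one_ne_zero η).hasDerivAt)
    (hφ₁.continuous_deriv le_rfl).continuousOn
    (image_eq_zero_of_notMem_tsupport hα') (image_eq_zero_of_notMem_tsupport hβ')
    (image_eq_zero_of_notMem_tsupport fun h ↦ hα' (tsupport_deriv_subset h))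
    (image_eq_zero_of_notMem_tsupport fun h ↦ hβ' (tsupport_deriv_subset h))
    (fun η hη ↦ (hC _ hμ η hη).2)
  have := continuousOn_rpow_const_Icc hα (a - 1 - 1 - 1) (β := β)
  fun_prop

end PowerPhase

section KernelMajorant

/-- The function `u ↦ min (|u| ^ (-1/2)) (u ^ (-2))`, which up to scaling dominates the kernels
`oscIntegral (powerPhase a) φ` uniformly in time. At the junk value `u = 0` it vanishes. -/
def kernelMajorant (u : ℝ) : ℝ := min (1 / √|u|) (1 / u ^ 2)

lemma measurable_kernelMajorant : Measurable kernelMajorant := by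
  unfold kernelMajorant
  fun_prop

lemma kernelMajorant_nonneg (u : ℝ) : 0 ≤ kernelMajorant u := le_min (by positivity) (by positivity)

lemma integrable_kernelMajorant : Integrable kernelMajorant := by
  have habs : kernelMajorant = fun u ↦ kernelMajorant ‖u‖ := by
    ext u
    simp only [kernelMajorant, norm_eq_abs, abs_abs, sq_abs]
  rw [habs, integrable_fun_norm_addHaar]
  simp only [Module.finrank_self, tsub_self, pow_zero, one_smul]
  rw [← Ioc_union_Ioi_eq_Ioi zero_le_one]
  refine .union (Integrable.mono' (g := fun u ↦ u ^ (-(1 / 2) : ℝ))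
      ((intervalIntegral.intervalIntegrable_rpow' (by norm_num)).1)
      measurable_kernelMajorant.aestronglyMeasurable ?_)
    (Integrable.mono' (integrableOn_Ioi_rpow_of_lt (a := -2) (by norm_num) one_pos)
      measurable_kernelMajorant.aestronglyMeasurable ?_)
  · refine (ae_restrict_iff' measurableSet_Ioc).2 (.of_forall fun u hu ↦ ?_)
    rw [norm_of_nonneg (kernelMajorant_nonneg u)]
    refine (min_le_left _ _).trans_eq ?_
    rw [abs_of_pos hu.1, rpow_neg hu.1.le, ← sqrt_eq_rpow, one_div]
  · refine (ae_restrict_iff' measurableSet_Ioi).2 (.of_forall fun u hu ↦ ?_)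
    rw [norm_of_nonneg (kernelMajorant_nonneg u)]
    refine (min_le_right _ _).trans_eq ?_
    rw [rpow_neg (zero_le_one.trans hu.le), rpow_two, one_div]

lemma le_div_sqrt_mul_kernelMajorant {k C T y : ℝ} (hT : 0 < T) (hy : y ≠ 0)
    (hsqrt : k * √|y| ≤ C) (hsq : k * y ^ 2 ≤ C * (T * √T)) :
    k ≤ C / √T * kernelMajorant (y / T) := by
  have hy' := abs_pos.2 hy
  have hsT := sqrt_pos.2 hT
  have hsy := sqrt_pos.2 hy'
  rw [kernelMajorant, abs_div, abs_of_pos hT, sqrt_div hy'.le, div_pow, one_div_div, one_div_div]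
  rcases min_choice (√T / √|y|) (T ^ 2 / y ^ 2) with h | h <;> rw [h]
  · rwa [div_mul_div_cancel₀ hsT.ne', le_div_iff₀ hsy]
  · have hTT : C / √T * (T ^ 2 / y ^ 2) = C * (T * √T) / y ^ 2 := by
      have : √T ^ 2 = T := sq_sqrt hT.le
      field_simp
      rw [this]
    rwa [hTT, le_div_iff₀ (by positivity)]

lemma mul_sqrt_abs_le_add {k A B y : ℝ} (hk : 0 ≤ k) (hA : k ≤ A) (hB : k * y ^ 2 ≤ B) :
    k * √|y| ≤ A + B := by
  have hsqrt : √|y| ≤ 1 + y ^ 2 := sqrt_le_iff.2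
    ⟨by positivity, by nlinarith [sq_abs y, sq_nonneg (|y| - 1), sq_nonneg (y ^ 2)]⟩
  calc k * √|y| ≤ k * (1 + y ^ 2) := by gcongr
    _ ≤ A + B := by linarith

lemma mul_sq_le_of_mul_sqrt_abs_le {k D y Y : ℝ} (hD : 0 ≤ D) (hk : k * √|y| ≤ D) (hy : |y| ≤ Y) :
    k * y ^ 2 ≤ D * (Y * √Y) :=
  calc k * y ^ 2 = k * √|y| * (|y| * √|y|) := by
        rw [← sq_abs]
        linear_combination (-k * |y|) * mul_self_sqrt (abs_nonneg y)
    _ ≤ D * (Y * √Y) := by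
        have hY : 0 ≤ Y := (abs_nonneg y).trans hy
        gcongr

variable {a α β : ℝ} {φ : ℝ → ℂ}

theorem exists_norm_oscIntegral_powerPhase_le_kernelMajorant (ha : 0 < a) (ha1 : a ≠ 1)
    (hα : 0 < α) (hαβ : α ≤ β) (hφ : ContDiff ℝ 2 φ) (hsupp : tsupport φ ⊆ Ioo α β) :
    ∃ C, ∀ T y l : ℝ, 1 ≤ T → y ≠ 0 → |l| ≤ T →
      ‖oscIntegral (powerPhase a) φ y l‖ ≤ C / √T * kernelMajorant (y / T) := by
  obtain ⟨C₁, hC₁⟩ := exists_norm_oscIntegral_powerPhase_le_div_sqrt ha ha1 hα hαβ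
    (hφ.of_le one_le_two) hsupp
  obtain ⟨M, hM, C₂, hC₂⟩ :=
    exists_norm_oscIntegral_powerPhase_le_div_sq (a := a) hα hαβ hφ hsupp
  set C₀ := ∫ ξ, ‖φ ξ‖
  have hC₀ : 0 ≤ C₀ := integral_nonneg fun ξ ↦ norm_nonneg _
  have hC₁0 : 0 ≤ C₁ := by simpa using (norm_nonneg _).trans (hC₁ 0 1 one_ne_zero)
  have hC₂0 : 0 ≤ C₂ := by simpa using (norm_nonneg _).trans (hC₂ 1 0 one_ne_zero (by simp))
  set D := C₁ * √M
  have hD : 0 ≤ D := by positivity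
  refine ⟨C₀ + C₂ + D + D * (M * √M), fun T y l hT hy hl ↦ ?_⟩
  have hT0 : 0 < T := one_pos.trans_le hT
  have hTT : 1 ≤ T * √T := one_le_mul_of_one_le_of_one_le hT (one_le_sqrt.2 hT)
  have hDM : 0 ≤ D * (M * √M) := by positivity
  set k := ‖oscIntegral (powerPhase a) φ y l‖
  have hk : 0 ≤ k := norm_nonneg _
  rcases le_or_gt (M * |l|) |y| with hnonstat | hstat
  · have hksq : k * y ^ 2 ≤ C₂ := (le_div_iff₀ (by positivity)).1 (hC₂ y l hy hnonstat)
    have hksqrt := mul_sqrt_abs_le_add hk (norm_oscIntegral_le y l) hksq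
    exact le_div_sqrt_mul_kernelMajorant hT0 hy (by linarith)
      ((hksq.trans (by linarith)).trans (le_mul_of_one_le_right (by linarith) hTT))
  · have hl0 : l ≠ 0 := by
      rintro rfl
      simp [(abs_nonneg y).not_gt] at hstat
    have hksqrt : k * √|y| ≤ D := calc
      k * √|y| ≤ k * (√M * √|l|) := by
        rw [← sqrt_mul hM.le]
        gcongr
      _ = k * √|l| * √M := by ring
      _ ≤ C₁ * √M := by
        gcongr
        exact (le_div_iff₀ (sqrt_pos.2 (abs_pos.2 hl0))).1 (hC₁ y l hl0)
    refine le_div_sqrt_mul_kernelMajorant hT0 hy (by linarith) ?_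
    have hyT : |y| ≤ M * T := hstat.le.trans (mul_le_mul_of_nonneg_left hl hM.le)
    calc k * y ^ 2 ≤ D * (M * T * √(M * T)) := mul_sq_le_of_mul_sqrt_abs_le hD hksqrt hyT
      _ = D * (M * √M) * (T * √T) := by rw [sqrt_mul hM.le]; ring
      _ ≤ (C₀ + C₂ + D + D * (M * √M)) * (T * √T) := by gcongr; linarith

end KernelMajorant

section MaximalFunction

/-- The maximal function of `oscIntegral p φ` over the times `|t| ≤ T`. -/
def maxOscIntegral (p : ℝ → ℝ) (φ : ℝ → ℂ) (T x : ℝ) : ℝ≥0∞ :=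
  ⨆ t : Icc (-T) T, ‖oscIntegral p φ x t‖ₑ

variable {p : ℝ → ℝ} {φ : ℝ → ℂ} {T : ℝ}

lemma measurable_maxOscIntegral (hp : Measurable p) (hφ : Integrable φ) :
    Measurable (maxOscIntegral p φ T) :=
  LowerSemicontinuous.measurable <| lowerSemicontinuous_iSup fun t ↦
    ((continuous_oscIntegral hp hφ).comp (Continuous.prodMk_left (t : ℝ))).enorm.lowerSemicontinuous

lemma enorm_oscIntegral_le_maxOscIntegral {x t : ℝ} (ht : t ∈ Icc (-T) T) :
    ‖oscIntegral p φ x t‖ₑ ≤ maxOscIntegral p φ T x :=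
  le_iSup (fun t : Icc (-T) T ↦ ‖oscIntegral p φ x t‖ₑ) ⟨t, ht⟩

lemma lintegral_comp_mul_left_eq {c : ℝ} (hc : c ≠ 0) {F : ℝ → ℝ≥0∞} (hF : Measurable F) :
    ∫⁻ x, F (c * x) = ENNReal.ofReal |c⁻¹| * ∫⁻ x, F x := by
  rw [← lintegral_map hF (measurable_const_mul c), map_volume_mul_left hc, lintegral_smul_measure,
    smul_eq_mul]

variable {a : ℝ}

theorem lintegral_maxOscIntegral_comp_mul_left_le {c : ℝ} (hc : c ≠ 0) (hφ : Integrable φ) :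
    ∫⁻ x, maxOscIntegral (powerPhase a) (fun ξ ↦ φ (c * ξ)) T x
      ≤ ∫⁻ x, maxOscIntegral (powerPhase a) φ (T * |c⁻¹| ^ a) x := by
  have hscale : ∀ x t, oscIntegral (powerPhase a) (fun ξ ↦ φ (c * ξ)) x t
      = |c⁻¹| * oscIntegral (powerPhase a) φ (c⁻¹ * x) (t * |c⁻¹| ^ a) := fun x t ↦ by
    rw [oscIntegral_comp_mul_left hc]
    simp only [oscIntegral, powerPhase_mul, mul_assoc]
  have hcc : ‖((|c⁻¹| : ℝ) : ℂ)‖ₑ = ENNReal.ofReal |c⁻¹| := by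
    rw [← ofReal_norm, Complex.norm_real, norm_eq_abs, abs_abs]
  have hpoint (x : ℝ) : maxOscIntegral (powerPhase a) (fun ξ ↦ φ (c * ξ)) T x
      ≤ ENNReal.ofReal |c⁻¹| * maxOscIntegral (powerPhase a) φ (T * |c⁻¹| ^ a) (c⁻¹ * x) := by
    refine iSup_le fun t ↦ ?_
    rw [hscale, enorm_mul, hcc]
    gcongr
    refine enorm_oscIntegral_le_maxOscIntegral (abs_le.1 ?_)
    rw [abs_mul, abs_of_nonneg (by positivity : 0 ≤ |c⁻¹| ^ a)]
    gcongr
    exact abs_le.2 t.2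
  have hmeas := measurable_maxOscIntegral (T := T * |c⁻¹| ^ a) (measurable_powerPhase a) hφ
  calc ∫⁻ x, maxOscIntegral (powerPhase a) (fun ξ ↦ φ (c * ξ)) T x
      ≤ ∫⁻ x, ENNReal.ofReal |c⁻¹| * maxOscIntegral (powerPhase a) φ (T * |c⁻¹| ^ a) (c⁻¹ * x) :=
        lintegral_mono hpoint
    _ = ENNReal.ofReal |c⁻¹| * (ENNReal.ofReal |c⁻¹⁻¹|
          * ∫⁻ x, maxOscIntegral (powerPhase a) φ (T * |c⁻¹| ^ a) x) := by
        rw [lintegral_const_mul' _ _ ENNReal.ofReal_ne_top,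
          lintegral_comp_mul_left_eq (inv_ne_zero hc) hmeas]
    _ = ∫⁻ x, maxOscIntegral (powerPhase a) φ (T * |c⁻¹| ^ a) x := by
        rw [← mul_assoc, ← ENNReal.ofReal_mul (abs_nonneg _), ← abs_mul,
          mul_inv_cancel₀ (inv_ne_zero hc), abs_one, ENNReal.ofReal_one, one_mul]

theorem exists_lintegral_maxOscIntegral_powerPhase_le {α β : ℝ} (ha : 0 < a) (ha1 : a ≠ 1)
    (hα : 0 < α) (hαβ : α ≤ β) (hφ : ContDiff ℝ 2 φ) (hsupp : tsupport φ ⊆ Ioo α β) :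
    ∃ C : ℝ≥0, ∀ T, 1 ≤ T → ∫⁻ x, maxOscIntegral (powerPhase a) φ T x ≤ C * ENNReal.ofReal √T := by
  obtain ⟨C, hC⟩ :=
    exists_norm_oscIntegral_powerPhase_le_kernelMajorant ha ha1 hα hαβ hφ hsupp
  refine ⟨(C * ∫ u, kernelMajorant u).toNNReal, fun T hT ↦ ?_⟩
  have hT0 : 0 < T := one_pos.trans_le hT
  have hpoint : ∀ᵐ x, maxOscIntegral (powerPhase a) φ T x
      ≤ ENNReal.ofReal (C / √T * kernelMajorant (x / T)) := by
    filter_upwards [Measure.ae_ne volume 0] with x hx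
    refine iSup_le fun t ↦ ?_
    rw [← ofReal_norm]
    exact ENNReal.ofReal_le_ofReal (hC T x t hT hx (abs_le.2 t.2))
  have hnonneg : ∀ᵐ x, 0 ≤ C / √T * kernelMajorant (x / T) := by
    filter_upwards [Measure.ae_ne volume 0] with x hx
    exact (norm_nonneg _).trans (hC T x 0 hT hx (by simpa using hT0.le))
  calc ∫⁻ x, maxOscIntegral (powerPhase a) φ T x
      ≤ ∫⁻ x, ENNReal.ofReal (C / √T * kernelMajorant (x / T)) := lintegral_mono_ae hpoint
    _ = ENNReal.ofReal (∫ x, C / √T * kernelMajorant (x / T)) :=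
        (ofReal_integral_eq_lintegral_ofReal
          ((integrable_kernelMajorant.comp_div hT0.ne').const_mul _) hnonneg).symm
    _ = ENNReal.ofReal ((C * ∫ u, kernelMajorant u) * √T) := by
        rw [integral_const_mul, Measure.integral_comp_div, abs_of_pos hT0, smul_eq_mul]
        congr 1
        rw [← mul_assoc, div_mul_eq_mul_div, mul_div_assoc, div_sqrt]
        ring
    _ = (C * ∫ u, kernelMajorant u).toNNReal * ENNReal.ofReal √T :=
        ENNReal.ofReal_mul' (sqrt_nonneg T)

end MaximalFunction

section SchurTest

lemma two_mul_mul_le_sq_add_sq (x y : ℝ≥0∞) : 2 * (x * y) ≤ x ^ 2 + y ^ 2 := by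
  induction x with
  | top => simp
  | coe x =>
    induction y with
    | top => simp
    | coe y =>
      have := two_mul_le_add_sq x y
      rw [mul_assoc] at this
      exact_mod_cast this

theorem lintegral_mul_mul_sub_le {G : Type*} [AddGroup G] [MeasurableSpace G] [MeasurableAdd G]
    [MeasurableNeg G] [MeasurableSub₂ G] {μ : Measure G} [SFinite μ] [μ.IsAddLeftInvariant]
    [μ.IsAddRightInvariant] [μ.IsNegInvariant] {u k : G → ℝ≥0∞} (hu : Measurable u)
    (hk : Measurable k) :
    ∫⁻ z, u z.1 * u z.2 * k (z.1 - z.2) ∂μ.prod μ ≤ (∫⁻ x, k x ∂μ) * ∫⁻ x, u x ^ 2 ∂μ := by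
  have hleft : ∫⁻ z, u z.1 ^ 2 * k (z.1 - z.2) ∂μ.prod μ
      = (∫⁻ x, k x ∂μ) * ∫⁻ x, u x ^ 2 ∂μ := by
    rw [lintegral_prod _ (by fun_prop), ← lintegral_const_mul _ (by fun_prop)]
    refine lintegral_congr fun x ↦ ?_
    dsimp only
    rw [lintegral_const_mul _ (by fun_prop), lintegral_sub_left_eq_self, mul_comm]
  have hright : ∫⁻ z, u z.2 ^ 2 * k (z.1 - z.2) ∂μ.prod μ
      = (∫⁻ x, k x ∂μ) * ∫⁻ x, u x ^ 2 ∂μ := by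
    rw [lintegral_prod_symm _ (by fun_prop), ← lintegral_const_mul _ (by fun_prop)]
    refine lintegral_congr fun y ↦ ?_
    dsimp only
    rw [lintegral_const_mul _ (by fun_prop), lintegral_sub_right_eq_self, mul_comm]
  refine (ENNReal.mul_le_mul_iff_right two_ne_zero ENNReal.ofNat_ne_top).1 ?_
  calc 2 * ∫⁻ z, u z.1 * u z.2 * k (z.1 - z.2) ∂μ.prod μ
      = ∫⁻ z, 2 * (u z.1 * u z.2) * k (z.1 - z.2) ∂μ.prod μ := by
        rw [← lintegral_const_mul' _ _ ENNReal.ofNat_ne_top]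
        simp only [mul_assoc]
    _ ≤ ∫⁻ z, (u z.1 ^ 2 * k (z.1 - z.2) + u z.2 ^ 2 * k (z.1 - z.2)) ∂μ.prod μ := by
        simp only [← add_mul]
        gcongr
        exact two_mul_mul_le_sq_add_sq _ _
    _ = 2 * ((∫⁻ x, k x ∂μ) * ∫⁻ x, u x ^ 2 ∂μ) := by
        rw [lintegral_add_left (by fun_prop), hleft, hright, ← two_mul]

end SchurTest

section Adjoint

/-- The adjoint of the linearized operator `g ↦ (x ↦ oscIntegral p g x (t x))`, in which the time
is frozen to a function `t` of the point; the adjoint is taken for the bilinear pairing. -/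
def oscAdjoint (p t : ℝ → ℝ) (h : ℝ → ℂ) (ξ : ℝ) : ℂ :=
  ∫ x, Complex.exp (Complex.I * ((x * ξ + t x * p ξ : ℝ) : ℂ)) * h x

variable {p t : ℝ → ℝ} {h : ℝ → ℂ}

lemma measurable_oscAdjoint (hp : Measurable p) (ht : Measurable t) (hh : Measurable h) :
    Measurable (oscAdjoint p t h) := by
  have : StronglyMeasurable fun z : ℝ × ℝ ↦
      Complex.exp (Complex.I * ((z.2 * z.1 + t z.2 * p z.1 : ℝ) : ℂ)) * h z.2 :=
    Measurable.stronglyMeasurable (by fun_prop)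
  exact (this.integral_prod_right' (ν := volume)).measurable

lemma norm_oscAdjoint_le (ξ : ℝ) : ‖oscAdjoint p t h ξ‖ ≤ ∫ x, ‖h x‖ :=
  (norm_integral_le_integral_norm _).trans_eq <| by
    simp only [norm_mul, Complex.norm_exp_I_mul_ofReal, one_mul]

/-- The function `(ξ, (x, y)) ↦ φ ξ e^{i(xξ + t(x)p(ξ))} h(x) conj(e^{i(yξ + t(y)p(ξ))} h(y))`
whose two iterated integrals express the `TT*` identity. -/
def adjointSquareKernel (p t : ℝ → ℝ) (φ h : ℝ → ℂ) (w : ℝ × ℝ × ℝ) : ℂ :=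
  Complex.exp (Complex.I *
      (((w.2.1 - w.2.2) * w.1 + (t w.2.1 - t w.2.2) * p w.1 : ℝ) : ℂ)) *
    (φ w.1 * (h w.2.1 * (starRingEnd ℂ) (h w.2.2)))

variable {φ : ℝ → ℂ}

lemma integrable_adjointSquareKernel (hp : Measurable p) (ht : Measurable t) (hφ : Integrable φ)
    (hh : Integrable h) :
    Integrable (adjointSquareKernel p t φ h) (volume.prod (volume.prod volume)) := by
  have hconj : Integrable fun x ↦ (starRingEnd ℂ) (h x) :=
    Complex.conjCLE.toContinuousLinearMap.integrable_comp hh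
  refine (hφ.mul_prod (hh.mul_prod hconj)).bdd_mul (c := 1)
    (Measurable.aestronglyMeasurable (by fun_prop)) (.of_forall fun w ↦ ?_)
  exact (Complex.norm_exp_I_mul_ofReal _).le

lemma integral_adjointSquareKernel_right (ξ : ℝ) :
    ∫ z, adjointSquareKernel p t φ h (ξ, z) = φ ξ * (‖oscAdjoint p t h ξ‖ ^ 2 : ℝ) := by
  set E : ℝ → ℂ := fun x ↦ Complex.exp (Complex.I * ((x * ξ + t x * p ξ : ℝ) : ℂ)) * h x
  have hfactor : ∀ z : ℝ × ℝ,
      adjointSquareKernel p t φ h (ξ, z) = φ ξ * (E z.1 * (starRingEnd ℂ) (E z.2)) := fun z ↦ by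
    have hexp : Complex.I * (((z.1 - z.2) * ξ + (t z.1 - t z.2) * p ξ : ℝ) : ℂ)
        = Complex.I * ((z.1 * ξ + t z.1 * p ξ : ℝ) : ℂ)
          + -Complex.I * ((z.2 * ξ + t z.2 * p ξ : ℝ) : ℂ) := by push_cast; ring
    simp only [adjointSquareKernel, E, map_mul, ← Complex.exp_conj, Complex.conj_I,
      Complex.conj_ofReal, hexp, Complex.exp_add]
    ring
  simp only [hfactor]
  rw [integral_const_mul, Measure.volume_eq_prod, integral_prod_mul (f := E)
    (g := fun x ↦ (starRingEnd ℂ) (E x)), integral_conj, Complex.mul_conj,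
    Complex.normSq_eq_norm_sq, oscAdjoint]

lemma integral_adjointSquareKernel_left (z : ℝ × ℝ) :
    ∫ ξ, adjointSquareKernel p t φ h (ξ, z)
      = oscIntegral p φ (z.1 - z.2) (t z.1 - t z.2) * (h z.1 * (starRingEnd ℂ) (h z.2)) := by
  rw [oscIntegral, ← integral_mul_const]
  simp only [adjointSquareKernel, mul_assoc]

theorem integral_mul_norm_oscAdjoint_sq_eq (hp : Measurable p) (ht : Measurable t)
    (hφ : Integrable φ) (hh : Integrable h) :
    ∫ ξ, φ ξ * (‖oscAdjoint p t h ξ‖ ^ 2 : ℝ)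
      = ∫ z : ℝ × ℝ, oscIntegral p φ (z.1 - z.2) (t z.1 - t z.2)
          * (h z.1 * (starRingEnd ℂ) (h z.2)) := by
  simp only [← integral_adjointSquareKernel_right, ← integral_adjointSquareKernel_left]
  exact integral_integral_swap (integrable_adjointSquareKernel hp ht hφ hh)

lemma enorm_integral_mul_norm_oscAdjoint_sq_eq {φ : ℝ → ℝ} (hp : Measurable p) (ht : Measurable t)
    (hφ : Integrable φ) (hφ0 : ∀ ξ, 0 ≤ φ ξ) (hh : Measurable h) :
    ‖∫ ξ, (φ ξ : ℂ) * (‖oscAdjoint p t h ξ‖ ^ 2 : ℝ)‖ₑ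
      = ∫⁻ ξ, ENNReal.ofReal (φ ξ) * ‖oscAdjoint p t h ξ‖ₑ ^ 2 := by
  have hnonneg : ∀ ξ, 0 ≤ φ ξ * ‖oscAdjoint p t h ξ‖ ^ 2 := fun ξ ↦ by have := hφ0 ξ; positivity
  have hint : Integrable fun ξ ↦ φ ξ * ‖oscAdjoint p t h ξ‖ ^ 2 := by
    refine hφ.mul_bdd (c := (∫ x, ‖h x‖) ^ 2)
      ((measurable_oscAdjoint hp ht hh).norm.pow_const 2).aestronglyMeasurable
      (.of_forall fun ξ ↦ ?_)
    rw [norm_pow, norm_norm]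
    gcongr
    exact norm_oscAdjoint_le ξ
  simp only [← Complex.ofReal_mul]
  rw [integral_complex_ofReal, ← ofReal_norm, Complex.norm_real,
    norm_of_nonneg (integral_nonneg hnonneg),
    ofReal_integral_eq_lintegral_ofReal hint (.of_forall hnonneg)]
  refine lintegral_congr fun ξ ↦ ?_
  rw [ENNReal.ofReal_mul (hφ0 ξ), ENNReal.ofReal_pow (norm_nonneg _), ofReal_norm]

theorem lintegral_oscAdjoint_sq_le_maxOscIntegral {φ : ℝ → ℝ} {T : ℝ} (hp : Measurable p)
    (ht : Measurable t) (htT : ∀ x, |t x| ≤ T) (hφ : Integrable φ) (hφ0 : ∀ ξ, 0 ≤ φ ξ)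
    (hhm : Measurable h) (hh : Integrable h) :
    ∫⁻ ξ, ENNReal.ofReal (φ ξ) * ‖oscAdjoint p t h ξ‖ₑ ^ 2
      ≤ (∫⁻ x, maxOscIntegral p (fun ξ ↦ (φ ξ : ℂ)) (2 * T) x) * ∫⁻ x, ‖h x‖ₑ ^ 2 := by
  have hφc : Integrable fun ξ ↦ (φ ξ : ℂ) := hφ.ofReal
  have htz : ∀ z : ℝ × ℝ, t z.1 - t z.2 ∈ Icc (-(2 * T)) (2 * T) := fun z ↦
    abs_le.1 <| (abs_sub _ _).trans (by linarith [htT z.1, htT z.2])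
  calc ∫⁻ ξ, ENNReal.ofReal (φ ξ) * ‖oscAdjoint p t h ξ‖ₑ ^ 2
      = ‖∫ z : ℝ × ℝ, oscIntegral p (fun ξ ↦ (φ ξ : ℂ)) (z.1 - z.2) (t z.1 - t z.2)
          * (h z.1 * (starRingEnd ℂ) (h z.2))‖ₑ := by
        rw [← enorm_integral_mul_norm_oscAdjoint_sq_eq hp ht hφ hφ0 hhm,
          integral_mul_norm_oscAdjoint_sq_eq hp ht hφc hh]
    _ ≤ ∫⁻ z : ℝ × ℝ, ‖h z.1‖ₑ * ‖h z.2‖ₑ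
          * maxOscIntegral p (fun ξ ↦ (φ ξ : ℂ)) (2 * T) (z.1 - z.2) := by
        refine (enorm_integral_le_lintegral_enorm _).trans (lintegral_mono fun z ↦ ?_)
        rw [enorm_mul, enorm_mul, RCLike.enorm_conj, mul_comm]
        gcongr
        exact enorm_oscIntegral_le_maxOscIntegral (htz z)
    _ ≤ (∫⁻ x, maxOscIntegral p (fun ξ ↦ (φ ξ : ℂ)) (2 * T) x) * ∫⁻ x, ‖h x‖ₑ ^ 2 :=
        lintegral_mul_mul_sub_le hhm.enorm (measurable_maxOscIntegral hp hφc)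

end Adjoint

section LowFrequencies

variable {p t : ℝ → ℝ} {h : ℝ → ℂ}

lemma oscIntegral_zero_gaussian (x t : ℝ) :
    oscIntegral 0 (fun ξ ↦ (exp (-ξ ^ 2) : ℂ)) x t = (√π * exp (-(1 / 4) * x ^ 2) : ℝ) := by
  have hint := fourierIntegral_gaussian (b := 1) (by simp) (x : ℂ)
  have hsqrt : (π : ℂ) ^ (1 / 2 : ℂ) = (√π : ℝ) := by
    rw [sqrt_eq_rpow, Complex.ofReal_cpow pi_nonneg]; norm_num
  rw [div_one, hsqrt] at hint
  convert hint using 1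
  · simp only [oscIntegral, Pi.zero_apply, mul_zero, add_zero, Complex.ofReal_exp]
    push_cast
    simp only [mul_assoc, neg_one_mul]
  · push_cast
    ring_nf

theorem lintegral_maxOscIntegral_zero_gaussian_lt_top (T : ℝ) :
    ∫⁻ x, maxOscIntegral 0 (fun ξ ↦ (exp (-ξ ^ 2) : ℂ)) T x < ∞ := by
  have hgauss : Integrable fun x : ℝ ↦ √π * exp (-(1 / 4) * x ^ 2) :=
    (integrable_exp_neg_mul_sq (by norm_num)).const_mul _
  refine (lintegral_mono fun x ↦ iSup_le fun t ↦ ?_).trans_lt hgauss.hasFiniteIntegral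
  rw [oscIntegral_zero_gaussian, ← ofReal_norm, Complex.norm_real, ofReal_norm]

theorem exists_lintegral_Icc_oscAdjoint_zero_le (R : ℝ) :
    ∃ C : ℝ≥0, ∀ h : ℝ → ℂ, Measurable h → Integrable h →
      ∫⁻ ξ in Icc (-R) R, ‖oscAdjoint 0 0 h ξ‖ₑ ^ 2 ≤ C * ∫⁻ x, ‖h x‖ₑ ^ 2 := by
  have hgauss : Integrable fun ξ : ℝ ↦ exp (-ξ ^ 2) := by
    simpa only [neg_one_mul] using integrable_exp_neg_mul_sq one_pos
  obtain ⟨K, hK⟩ := WithTop.ne_top_iff_exists.1 (lintegral_maxOscIntegral_zero_gaussian_lt_top 0).ne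
  refine ⟨(exp (R ^ 2)).toNNReal * K, fun h hhm hh ↦ ?_⟩
  have hweight : ∀ ξ ∈ Icc (-R) R,
      1 ≤ ENNReal.ofReal (exp (R ^ 2)) * ENNReal.ofReal (exp (-ξ ^ 2)) := fun ξ hξ ↦ by
    rw [← ENNReal.ofReal_mul (exp_nonneg _), ← exp_add, ENNReal.one_le_ofReal, one_le_exp_iff]
    linarith [sq_le_sq.2 ((abs_le.2 hξ).trans (le_abs_self R))]
  calc ∫⁻ ξ in Icc (-R) R, ‖oscAdjoint 0 0 h ξ‖ₑ ^ 2
      ≤ ∫⁻ ξ in Icc (-R) R, ENNReal.ofReal (exp (R ^ 2)) *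
          (ENNReal.ofReal (exp (-ξ ^ 2)) * ‖oscAdjoint 0 0 h ξ‖ₑ ^ 2) := by
        refine setLIntegral_mono' measurableSet_Icc fun ξ hξ ↦ ?_
        rw [← mul_assoc]
        exact le_mul_of_one_le_left' (hweight ξ hξ)
    _ ≤ ENNReal.ofReal (exp (R ^ 2)) *
          ∫⁻ ξ, ENNReal.ofReal (exp (-ξ ^ 2)) * ‖oscAdjoint 0 0 h ξ‖ₑ ^ 2 := by
        rw [lintegral_const_mul' _ _ ENNReal.ofReal_ne_top]
        gcongr
        exact Measure.restrict_le_self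
    _ ≤ ENNReal.ofReal (exp (R ^ 2)) * (K * ∫⁻ x, ‖h x‖ₑ ^ 2) := by
        gcongr
        have := lintegral_oscAdjoint_sq_le_maxOscIntegral (p := 0) (t := 0) (T := 0) measurable_zero
          measurable_zero (by simp) hgauss (fun ξ ↦ (exp_pos _).le) hhm hh
        rwa [mul_zero, ← hK] at this
    _ = ((exp (R ^ 2)).toNNReal * K : ℝ≥0) * ∫⁻ x, ‖h x‖ₑ ^ 2 := by
        rw [ENNReal.coe_mul, ENNReal.ofReal, mul_assoc]

lemma sq_tsum_mul_le {ι : Type*} (w x : ι → ℝ≥0∞) :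
    (∑' i, w i * x i) ^ 2 ≤ (∑' i, w i) * ∑' i, w i * x i ^ 2 := by
  refine (ENNReal.mul_le_mul_iff_right two_ne_zero ENNReal.ofNat_ne_top).1 ?_
  calc 2 * (∑' i, w i * x i) ^ 2 = ∑' i, ∑' j, w i * w j * (2 * (x i * x j)) := by
        simp only [sq, ← ENNReal.tsum_mul_right, mul_left_comm _ (2 : ℝ≥0∞)]
        simp only [← ENNReal.tsum_mul_left, mul_mul_mul_comm]
    _ ≤ ∑' i, ∑' j, (w i * x i ^ 2 * w j + w i * (w j * x j ^ 2)) := by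
        refine ENNReal.tsum_le_tsum fun i ↦ ENNReal.tsum_le_tsum fun j ↦ ?_
        calc w i * w j * (2 * (x i * x j)) ≤ w i * w j * (x i ^ 2 + x j ^ 2) := by
              gcongr; exact two_mul_mul_le_sq_add_sq _ _
          _ = w i * x i ^ 2 * w j + w i * (w j * x j ^ 2) := by ring
    _ = 2 * ((∑' i, w i) * ∑' i, w i * x i ^ 2) := by
        simp_rw [ENNReal.tsum_add, ENNReal.tsum_mul_left, ENNReal.tsum_mul_right]
        ring

/-- The `n`-th term of the expansion of the integrand of `oscAdjoint p t h ξ` in powers of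
`t x * p ξ`. -/
def oscAdjointTerm (p t : ℝ → ℝ) (h : ℝ → ℂ) (ξ : ℝ) (n : ℕ) (x : ℝ) : ℂ :=
  (Complex.I * p ξ) ^ n / n.factorial *
    (Complex.exp (Complex.I * (x * ξ : ℝ)) * ((t x : ℂ) ^ n * h x))

lemma integral_oscAdjointTerm (ξ : ℝ) (n : ℕ) :
    ∫ x, oscAdjointTerm p t h ξ n x = (Complex.I * p ξ) ^ n / n.factorial *
      oscAdjoint 0 0 (fun x ↦ (t x : ℂ) ^ n * h x) ξ := by
  simp only [oscAdjointTerm, oscAdjoint, Pi.zero_apply, mul_zero, add_zero]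
  exact integral_const_mul _ _

lemma tsum_oscAdjointTerm (ξ x : ℝ) :
    ∑' n, oscAdjointTerm p t h ξ n x
      = Complex.exp (Complex.I * ((x * ξ + t x * p ξ : ℝ) : ℂ)) * h x := by
  have hexp : HasSum (fun n : ℕ ↦ (Complex.I * ((t x * p ξ : ℝ) : ℂ)) ^ n / n.factorial)
      (Complex.exp (Complex.I * ((t x * p ξ : ℝ) : ℂ))) := by
    rw [Complex.exp_eq_exp_ℂ]
    exact NormedSpace.expSeries_div_hasSum_exp _
  convert (hexp.mul_right (Complex.exp (Complex.I * ((x * ξ : ℝ) : ℂ)) * h x)).tsum_eq using 1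
  · refine tsum_congr fun n ↦ ?_
    simp only [oscAdjointTerm]
    push_cast
    ring
  · rw [← mul_assoc, ← Complex.exp_add]
    push_cast
    ring_nf

lemma norm_I_mul_pow_div_factorial_le {ξ : ℝ} (hp : |p ξ| ≤ 1) (n : ℕ) :
    ‖(Complex.I * p ξ) ^ n / n.factorial‖ ≤ 1 / n.factorial := by
  simp only [norm_div, norm_pow, norm_mul, Complex.norm_I, one_mul, Complex.norm_real,
    Complex.norm_natCast, norm_eq_abs]
  gcongr
  exact pow_le_one₀ (abs_nonneg _) hp

lemma norm_ofReal_pow_mul_le (ht : ∀ x, |t x| ≤ 1) (n : ℕ) (x : ℝ) :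
    ‖(t x : ℂ) ^ n * h x‖ ≤ ‖h x‖ := by
  rw [norm_mul, norm_pow, Complex.norm_real]
  exact mul_le_of_le_one_left (norm_nonneg _) (pow_le_one₀ (norm_nonneg _) (ht x))

theorem hasSum_oscAdjoint {ξ : ℝ} (hp : |p ξ| ≤ 1) (htm : Measurable t) (ht : ∀ x, |t x| ≤ 1)
    (hhm : Measurable h) (hh : Integrable h) :
    HasSum (fun n : ℕ ↦ (Complex.I * p ξ) ^ n / n.factorial *
      oscAdjoint 0 0 (fun x ↦ (t x : ℂ) ^ n * h x) ξ) (oscAdjoint p t h ξ) := by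
  have hbound : ∀ n x, ‖oscAdjointTerm p t h ξ n x‖ ≤ 1 / n.factorial * ‖h x‖ := fun n x ↦ by
    rw [oscAdjointTerm, norm_mul, norm_mul, Complex.norm_exp_I_mul_ofReal, one_mul]
    gcongr
    exacts [norm_I_mul_pow_div_factorial_le hp n, norm_ofReal_pow_mul_le ht n x]
  have hint : ∀ n, Integrable (oscAdjointTerm p t h ξ n) := fun n ↦
    (hh.norm.const_mul (1 / (n.factorial : ℝ))).mono'
      (Measurable.aestronglyMeasurable (by unfold oscAdjointTerm; fun_prop)) (.of_forall (hbound n))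
  have hsummable : Summable fun n ↦ ∫ x, ‖oscAdjointTerm p t h ξ n x‖ := by
    refine .of_nonneg_of_le (fun n ↦ integral_nonneg fun x ↦ norm_nonneg _) (fun n ↦ ?_)
      ((summable_pow_div_factorial 1).mul_right (∫ x, ‖h x‖))
    rw [one_pow, ← integral_const_mul]
    exact integral_mono (hint n).norm (hh.norm.const_mul _) (hbound n)
  have hsum := hasSum_integral_of_summable_integral_norm hint hsummable
  simp only [integral_oscAdjointTerm, tsum_oscAdjointTerm] at hsum
  exact hsum

lemma tsum_ofReal_one_div_factorial :
    ∑' n : ℕ, ENNReal.ofReal (1 / n.factorial) = ENNReal.ofReal (exp 1) := by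
  rw [exp_eq_exp_ℝ, NormedSpace.exp_eq_tsum_div, ENNReal.ofReal_tsum_of_nonneg
    (fun n ↦ by positivity) (summable_pow_div_factorial 1)]
  simp only [one_pow]

theorem lintegral_oscAdjoint_sq_le_of_abs_le_one {μ : Measure ℝ} {K : ℝ≥0∞}
    (hK : ∀ h : ℝ → ℂ, Measurable h → Integrable h →
      ∫⁻ ξ, ‖oscAdjoint 0 0 h ξ‖ₑ ^ 2 ∂μ ≤ K * ∫⁻ x, ‖h x‖ₑ ^ 2)
    (hp : ∀ᵐ ξ ∂μ, |p ξ| ≤ 1) (htm : Measurable t) (ht : ∀ x, |t x| ≤ 1)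
    (hhm : Measurable h) (hh : Integrable h) :
    ∫⁻ ξ, ‖oscAdjoint p t h ξ‖ₑ ^ 2 ∂μ
      ≤ ENNReal.ofReal (exp 1) ^ 2 * K * ∫⁻ x, ‖h x‖ₑ ^ 2 := by
  set w : ℕ → ℝ≥0∞ := fun n ↦ ENNReal.ofReal (1 / n.factorial)
  set G : ℕ → ℝ → ℂ := fun n ↦ oscAdjoint 0 0 fun x ↦ (t x : ℂ) ^ n * h x
  have hGm : ∀ n, Measurable (G n) := fun n ↦
    measurable_oscAdjoint measurable_zero measurable_zero (by fun_prop)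
  have hpoint : ∀ ξ, |p ξ| ≤ 1 → ‖oscAdjoint p t h ξ‖ₑ ≤ ∑' n, w n * ‖G n ξ‖ₑ := fun ξ hξ ↦ by
    rw [← (hasSum_oscAdjoint hξ htm ht hhm hh).tsum_eq]
    refine enorm_tsum_le_tsum_enorm.trans (ENNReal.tsum_le_tsum fun n ↦ ?_)
    rw [enorm_mul, ← ofReal_norm]
    gcongr
    exact ENNReal.ofReal_le_ofReal (norm_I_mul_pow_div_factorial_le hξ n)
  have hterm : ∀ n, ∫⁻ ξ, ‖G n ξ‖ₑ ^ 2 ∂μ ≤ K * ∫⁻ x, ‖h x‖ₑ ^ 2 := fun n ↦ by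
    have hle := norm_ofReal_pow_mul_le (h := h) ht n
    refine (hK _ (by fun_prop) (hh.mono (Measurable.aestronglyMeasurable (by fun_prop))
      (.of_forall hle))).trans ?_
    gcongr with x
    exact enorm_le_iff_norm_le.2 (hle x)
  calc ∫⁻ ξ, ‖oscAdjoint p t h ξ‖ₑ ^ 2 ∂μ
      ≤ ∫⁻ ξ, (∑' n, w n) * ∑' n, w n * ‖G n ξ‖ₑ ^ 2 ∂μ := by
        refine lintegral_mono_ae (hp.mono fun ξ hξ ↦ ?_)
        exact (pow_le_pow_left' (hpoint ξ hξ) 2).trans (sq_tsum_mul_le _ _)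
    _ = (∑' n, w n) * ∑' n, w n * ∫⁻ ξ, ‖G n ξ‖ₑ ^ 2 ∂μ := by
        rw [lintegral_const_mul _ (by fun_prop), lintegral_tsum (fun n ↦ by fun_prop)]
        simp only [lintegral_const_mul' _ _ ENNReal.ofReal_ne_top, w]
    _ ≤ (∑' n, w n) * ∑' n, w n * (K * ∫⁻ x, ‖h x‖ₑ ^ 2) := by
        gcongr with n
        exact hterm n
    _ = ENNReal.ofReal (exp 1) ^ 2 * K * ∫⁻ x, ‖h x‖ₑ ^ 2 := by
        rw [ENNReal.tsum_mul_right, tsum_ofReal_one_div_factorial]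
        ring

theorem exists_lintegral_Icc_oscAdjoint_le {a : ℝ} (ha : 0 < a) :
    ∃ C : ℝ≥0, ∀ t : ℝ → ℝ, Measurable t → (∀ x, |t x| ≤ 1) →
      ∀ h : ℝ → ℂ, Measurable h → Integrable h →
      ∫⁻ ξ in Icc (-1) 1, ‖oscAdjoint (powerPhase a) t h ξ‖ₑ ^ 2 ≤ C * ∫⁻ x, ‖h x‖ₑ ^ 2 := by
  obtain ⟨C, hC⟩ := exists_lintegral_Icc_oscAdjoint_zero_le 1
  refine ⟨(exp 1).toNNReal ^ 2 * C, fun t htm ht h hhm hh ↦ ?_⟩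
  refine (lintegral_oscAdjoint_sq_le_of_abs_le_one hC ?_ htm ht hhm hh).trans_eq ?_
  · filter_upwards [ae_restrict_mem measurableSet_Icc] with ξ hξ
    rw [powerPhase, abs_of_nonneg (by positivity)]
    exact rpow_le_one (abs_nonneg _) (abs_le.2 hξ) ha.le
  · rw [ENNReal.coe_mul, ENNReal.coe_pow, ENNReal.ofReal]

end LowFrequencies

section HighFrequencies

/-- A smooth cutoff equal to `1` on `[1, 2]` and supported in `[1/2, 5/2]`. -/
def annulusBump : ContDiffBump (3 / 2 : ℝ) where
  rIn := 1 / 2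
  rOut := 1
  rIn_pos := one_half_pos
  rIn_lt_rOut := one_half_lt_one

/-- The frequencies `ξ` with `R ≤ |ξ| ≤ 2R`. -/
def annulus (R : ℝ) : Set ℝ := {ξ | |ξ| ∈ Icc R (2 * R)}

variable {a s : ℝ}

lemma annulusBump_eq_one {ξ : ℝ} (hξ : ξ ∈ Icc 1 2) : annulusBump ξ = 1 := by
  refine annulusBump.one_of_mem_closedBall ?_
  rw [Metric.mem_closedBall, dist_eq, abs_le, annulusBump]
  constructor <;> linarith [hξ.1, hξ.2]

lemma measurableSet_annulus (R : ℝ) : MeasurableSet (annulus R) :=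
  measurableSet_Icc.preimage measurable_norm

lemma exists_lintegral_annulusBump_maxOscIntegral_le (ha : 0 < a) (ha1 : a ≠ 1) :
    ∃ C : ℝ≥0, ∀ T, 1 ≤ T →
      ∫⁻ x, maxOscIntegral (powerPhase a) (fun ξ ↦ (annulusBump ξ : ℂ)) T x
        ≤ C * ENNReal.ofReal √T := by
  refine exists_lintegral_maxOscIntegral_powerPhase_le (α := 1 / 4) (β := 3) ha ha1 (by norm_num)
    (by norm_num) (Complex.ofRealCLM.contDiff.comp annulusBump.contDiff) ?_
  refine (tsupport_comp_subset Complex.ofReal_zero _).trans ?_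
  rw [annulusBump.tsupport_eq, closedBall_eq_Icc]
  exact Icc_subset_Ioo (by norm_num [annulusBump]) (by norm_num [annulusBump])

theorem exists_lintegral_preimage_Icc_oscAdjoint_le (ha : 0 < a) (ha1 : a ≠ 1) :
    ∃ C : ℝ≥0, ∀ c : ℝ, c ≠ 0 → |c| ≤ 1 → ∀ t : ℝ → ℝ, Measurable t → (∀ x, |t x| ≤ 1) →
      ∀ h : ℝ → ℂ, Measurable h → Integrable h →
      ∫⁻ ξ in {ξ | c * ξ ∈ Icc 1 2}, ‖oscAdjoint (powerPhase a) t h ξ‖ₑ ^ 2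
        ≤ C * ENNReal.ofReal √(|c⁻¹| ^ a) * ∫⁻ x, ‖h x‖ₑ ^ 2 := by
  obtain ⟨C, hC⟩ := exists_lintegral_annulusBump_maxOscIntegral_le ha ha1
  refine ⟨C * (√2).toNNReal, fun c hc hc1 t htm ht h hhm hh ↦ ?_⟩
  have hbump : Integrable annulusBump :=
    annulusBump.continuous.integrable_of_hasCompactSupport annulusBump.hasCompactSupport
  have hone : 1 ≤ |c⁻¹| ^ a :=
    one_le_rpow (by rw [abs_inv]; exact (one_le_inv₀ (abs_pos.2 hc)).2 hc1) ha.le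
  have hkernel := (lintegral_maxOscIntegral_comp_mul_left_le (a := a) (T := 2 * 1) hc
    (hbump.ofReal (𝕜 := ℂ))).trans (hC _ (by linarith))
  calc ∫⁻ ξ in {ξ | c * ξ ∈ Icc 1 2}, ‖oscAdjoint (powerPhase a) t h ξ‖ₑ ^ 2
      ≤ ∫⁻ ξ in {ξ | c * ξ ∈ Icc 1 2},
          ENNReal.ofReal (annulusBump (c * ξ)) * ‖oscAdjoint (powerPhase a) t h ξ‖ₑ ^ 2 := by
        refine setLIntegral_mono' (measurableSet_Icc.preimage (measurable_const_mul c))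
          fun ξ hξ ↦ ?_
        rw [annulusBump_eq_one hξ, ENNReal.ofReal_one, one_mul]
    _ ≤ ∫⁻ ξ, ENNReal.ofReal (annulusBump (c * ξ)) * ‖oscAdjoint (powerPhase a) t h ξ‖ₑ ^ 2 :=
        setLIntegral_le_lintegral _ _
    _ ≤ C * ENNReal.ofReal √(2 * 1 * |c⁻¹| ^ a) * ∫⁻ x, ‖h x‖ₑ ^ 2 :=
        (lintegral_oscAdjoint_sq_le_maxOscIntegral (measurable_powerPhase a) htm ht
          (hbump.comp_mul_left' hc) (fun ξ ↦ annulusBump.nonneg) hhm hh).trans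
          (by gcongr; exact hkernel)
    _ = (C * (√2).toNNReal : ℝ≥0) * ENNReal.ofReal √(|c⁻¹| ^ a) * ∫⁻ x, ‖h x‖ₑ ^ 2 := by
        rw [mul_one, sqrt_mul zero_le_two, ENNReal.ofReal_mul (sqrt_nonneg 2), ENNReal.coe_mul,
          ← ENNReal.ofReal]
        ring

theorem exists_lintegral_annulus_oscAdjoint_le (ha : 0 < a) (ha1 : a ≠ 1) :
    ∃ C : ℝ≥0, ∀ R, 1 ≤ R → ∀ t : ℝ → ℝ, Measurable t → (∀ x, |t x| ≤ 1) →
      ∀ h : ℝ → ℂ, Measurable h → Integrable h →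
      ∫⁻ ξ in annulus R, ‖oscAdjoint (powerPhase a) t h ξ‖ₑ ^ 2
        ≤ C * ENNReal.ofReal √(R ^ a) * ∫⁻ x, ‖h x‖ₑ ^ 2 := by
  obtain ⟨C, hC⟩ := exists_lintegral_preimage_Icc_oscAdjoint_le ha ha1
  refine ⟨2 * C, fun R hR t htm ht h hhm hh ↦ ?_⟩
  have hR0 : 0 < R := one_pos.trans_le hR
  have habs : |R⁻¹| ≤ 1 := by rw [abs_of_pos (inv_pos.2 hR0)]; exact inv_le_one_of_one_le₀ hR
  have hcover : annulus R ⊆ {ξ | R⁻¹ * ξ ∈ Icc 1 2} ∪ {ξ | -R⁻¹ * ξ ∈ Icc 1 2} := by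
    have hscale : ∀ η ∈ Icc R (2 * R), R⁻¹ * η ∈ Icc 1 2 := fun η hη ↦
      ⟨(le_inv_mul_iff₀ hR0).2 (by linarith [hη.1]), (inv_mul_le_iff₀ hR0).2 (by linarith [hη.2])⟩
    intro ξ hξ
    rcases abs_choice ξ with hsign | hsign <;> rw [annulus, mem_ofPred_eq, hsign] at hξ
    · exact .inl (hscale ξ hξ)
    · exact .inr (by rw [mem_ofPred_eq, neg_mul_comm]; exact hscale _ hξ)
  have hplus := hC R⁻¹ (inv_ne_zero hR0.ne') habs t htm ht h hhm hh
  have hminus := hC (-R⁻¹) (neg_ne_zero.2 (inv_ne_zero hR0.ne')) (by rwa [abs_neg]) t htm ht h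
    hhm hh
  rw [inv_neg, abs_neg] at hminus
  rw [inv_inv, abs_of_pos hR0] at hplus hminus
  calc ∫⁻ ξ in annulus R, ‖oscAdjoint (powerPhase a) t h ξ‖ₑ ^ 2
      ≤ (∫⁻ ξ in {ξ | R⁻¹ * ξ ∈ Icc 1 2}, ‖oscAdjoint (powerPhase a) t h ξ‖ₑ ^ 2)
          + ∫⁻ ξ in {ξ | -R⁻¹ * ξ ∈ Icc 1 2}, ‖oscAdjoint (powerPhase a) t h ξ‖ₑ ^ 2 :=
        (lintegral_mono_set hcover).trans (lintegral_union_le _ _ _)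
    _ ≤ (2 * C : ℝ≥0) * ENNReal.ofReal √(R ^ a) * ∫⁻ x, ‖h x‖ₑ ^ 2 := by
        refine (add_le_add hplus hminus).trans_eq ?_
        rw [ENNReal.coe_mul, ENNReal.coe_ofNat]
        ring

lemma lintegral_le_Icc_add_tsum_annulus (F : ℝ → ℝ≥0∞) :
    ∫⁻ ξ, F ξ ≤ (∫⁻ ξ in Icc (-1) 1, F ξ) + ∑' k : ℕ, ∫⁻ ξ in annulus (2 ^ k), F ξ := by
  have hcover : univ ⊆ Icc (-1) 1 ∪ ⋃ k : ℕ, annulus (2 ^ k) := fun ξ _ ↦ by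
    rcases le_or_gt |ξ| 1 with hξ | hξ
    · exact .inl (abs_le.1 hξ)
    · obtain ⟨k, hk, hk'⟩ := exists_nat_pow_near hξ.le (one_lt_two : (1 : ℝ) < 2)
      exact .inr (mem_iUnion.2 ⟨k, hk, by rw [← pow_succ']; exact hk'.le⟩)
  calc ∫⁻ ξ, F ξ ≤ ∫⁻ ξ in Icc (-1) 1 ∪ ⋃ k : ℕ, annulus (2 ^ k), F ξ := by
        rw [← setLIntegral_univ]
        exact lintegral_mono_set hcover
    _ ≤ (∫⁻ ξ in Icc (-1) 1, F ξ) + ∑' k : ℕ, ∫⁻ ξ in annulus (2 ^ k), F ξ := by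
        refine (lintegral_union_le _ _ _).trans ?_
        gcongr
        exact lintegral_iUnion_le _ _

lemma ofReal_besselWeight_le {R ξ : ℝ} (hs : 0 ≤ s) (hR : 0 < R) (hξ : ξ ∈ annulus R) :
    ENNReal.ofReal ((1 + |ξ| ^ 2) ^ (-s)) ≤ ENNReal.ofReal (R ^ (-2 * s)) := by
  refine ENNReal.ofReal_le_ofReal ?_
  have hle : R ^ 2 ≤ 1 + |ξ| ^ 2 := by nlinarith [pow_le_pow_left₀ hR.le hξ.1 2]
  calc (1 + |ξ| ^ 2) ^ (-s) ≤ (R ^ 2) ^ (-s) :=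
        rpow_le_rpow_of_nonpos (by positivity) hle (neg_nonpos.2 hs)
    _ = R ^ (-2 * s) := by rw [← rpow_natCast_mul hR.le]; norm_num

lemma ofReal_rpow_mul_ofReal_sqrt_rpow (k : ℕ) :
    ENNReal.ofReal ((2 ^ k) ^ (-2 * s)) * ENNReal.ofReal √((2 ^ k) ^ a)
      = ENNReal.ofReal (2 ^ (a / 2 - 2 * s)) ^ k := by
  rw [← ENNReal.ofReal_mul (by positivity), ← ENNReal.ofReal_pow (by positivity), sqrt_eq_rpow,
    ← rpow_mul (by positivity), ← rpow_add (by positivity), ← rpow_natCast, ← rpow_natCast,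
    ← rpow_mul zero_le_two, ← rpow_mul zero_le_two]
  ring_nf

theorem exists_lintegral_besselWeight_oscAdjoint_le (ha : 0 < a) (ha1 : a ≠ 1) (hs : a / 4 < s) :
    ∃ C : ℝ≥0, ∀ t : ℝ → ℝ, Measurable t → (∀ x, |t x| ≤ 1) →
      ∀ h : ℝ → ℂ, Measurable h → Integrable h →
      ∫⁻ ξ, ENNReal.ofReal ((1 + |ξ| ^ 2) ^ (-s)) * ‖oscAdjoint (powerPhase a) t h ξ‖ₑ ^ 2
        ≤ C * ∫⁻ x, ‖h x‖ₑ ^ 2 := by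
  obtain ⟨C₁, hC₁⟩ := exists_lintegral_Icc_oscAdjoint_le ha
  obtain ⟨C₂, hC₂⟩ := exists_lintegral_annulus_oscAdjoint_le ha ha1
  set r : ℝ≥0∞ := ENNReal.ofReal (2 ^ (a / 2 - 2 * s))
  have hr : r < 1 :=
    ENNReal.ofReal_lt_one.2 (rpow_lt_one_of_one_lt_of_neg one_lt_two (by linarith))
  have hgeom : (1 - r)⁻¹ ≠ ∞ := ENNReal.inv_ne_top.2 (tsub_pos_of_lt hr).ne'
  refine ⟨C₁ + C₂ * (1 - r)⁻¹.toNNReal, fun t htm ht h hhm hh ↦ ?_⟩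
  set W : ℝ → ℝ≥0∞ := fun ξ ↦ ENNReal.ofReal ((1 + |ξ| ^ 2) ^ (-s))
  set H : ℝ → ℝ≥0∞ := fun ξ ↦ ‖oscAdjoint (powerPhase a) t h ξ‖ₑ ^ 2
  have hlow : ∫⁻ ξ in Icc (-1) 1, W ξ * H ξ ≤ C₁ * ∫⁻ x, ‖h x‖ₑ ^ 2 := by
    refine (lintegral_mono fun ξ ↦ mul_le_of_le_one_left' ?_).trans (hC₁ t htm ht h hhm hh)
    exact ENNReal.ofReal_le_one.2 (rpow_le_one_of_one_le_of_nonpos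
      (le_add_of_nonneg_right (by positivity)) (by linarith))
  have hhigh : ∀ k : ℕ,
      ∫⁻ ξ in annulus (2 ^ k), W ξ * H ξ ≤ r ^ k * (C₂ * ∫⁻ x, ‖h x‖ₑ ^ 2) := fun k ↦ by
    calc ∫⁻ ξ in annulus (2 ^ k), W ξ * H ξ
        ≤ ∫⁻ ξ in annulus (2 ^ k), ENNReal.ofReal ((2 ^ k) ^ (-2 * s)) * H ξ := by
          refine setLIntegral_mono' (measurableSet_annulus _) fun ξ hξ ↦ ?_
          gcongr
          exact ofReal_besselWeight_le (by linarith) (by positivity) hξ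
      _ ≤ ENNReal.ofReal ((2 ^ k) ^ (-2 * s)) *
            (C₂ * ENNReal.ofReal √((2 ^ k) ^ a) * ∫⁻ x, ‖h x‖ₑ ^ 2) := by
          rw [lintegral_const_mul' _ _ ENNReal.ofReal_ne_top]
          gcongr
          exact hC₂ _ (one_le_pow₀ one_le_two) t htm ht h hhm hh
      _ = r ^ k * (C₂ * ∫⁻ x, ‖h x‖ₑ ^ 2) := by
          rw [← ofReal_rpow_mul_ofReal_sqrt_rpow]
          ring
  calc ∫⁻ ξ, W ξ * H ξ
      ≤ (∫⁻ ξ in Icc (-1) 1, W ξ * H ξ) + ∑' k : ℕ, ∫⁻ ξ in annulus (2 ^ k), W ξ * H ξ :=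
        lintegral_le_Icc_add_tsum_annulus _
    _ ≤ C₁ * (∫⁻ x, ‖h x‖ₑ ^ 2) + ∑' k : ℕ, r ^ k * (C₂ * ∫⁻ x, ‖h x‖ₑ ^ 2) :=
        add_le_add hlow (ENNReal.tsum_le_tsum hhigh)
    _ = (C₁ + C₂ * (1 - r)⁻¹.toNNReal : ℝ≥0) * ∫⁻ x, ‖h x‖ₑ ^ 2 := by
        rw [ENNReal.tsum_mul_right, ENNReal.tsum_geometric, ENNReal.coe_add, ENNReal.coe_mul,
          ENNReal.coe_toNNReal hgeom]
        ring

end HighFrequencies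

section Duality

lemma lintegral_restrict_enorm_sq_le_of_dual {X 𝕜 : Type*} [RCLike 𝕜] [MeasurableSpace X]
    {μ : Measure X} {F : X → 𝕜} {K : ℝ≥0∞} {S : Set X} {M : ℝ} (hF : Measurable F)
    (hdual : ∀ h : X → 𝕜, Measurable h → Integrable h μ →
      ‖∫ x, h x * F x ∂μ‖ₑ ^ 2 ≤ K * ∫⁻ x, ‖h x‖ₑ ^ 2 ∂μ)
    (hS : MeasurableSet S) (hμS : μ S ≠ ∞) (hM : ∀ x ∈ S, ‖F x‖ ≤ M) :
    ∫⁻ x in S, ‖F x‖ₑ ^ 2 ∂μ ≤ K := by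
  set h : X → 𝕜 := S.indicator fun x ↦ (starRingEnd 𝕜) (F x)
  have hconj : Measurable fun x ↦ (starRingEnd 𝕜) (F x) :=
    RCLike.continuous_conj.measurable.comp hF
  have hint : IntegrableOn (fun x ↦ (starRingEnd 𝕜) (F x)) S μ :=
    .of_bound hμS.lt_top hconj.aestronglyMeasurable M
      ((ae_restrict_mem hS).mono fun x hx ↦ by rw [RCLike.norm_conj]; exact hM x hx)
  have hnorm : ∫⁻ x, ‖h x‖ₑ ^ 2 ∂μ = ∫⁻ x in S, ‖F x‖ₑ ^ 2 ∂μ := by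
    rw [← lintegral_indicator hS]
    refine lintegral_congr fun x ↦ ?_
    by_cases hx : x ∈ S <;> simp [h, hx]
  have hsqint : IntegrableOn (fun x ↦ ‖F x‖ ^ 2) S μ :=
    .of_bound hμS.lt_top (hF.norm.pow_const 2).aestronglyMeasurable (M ^ 2)
      ((ae_restrict_mem hS).mono fun x hx ↦ by rw [norm_pow, norm_norm]; gcongr; exact hM x hx)
  have hsqeq : ENNReal.ofReal (∫ x in S, ‖F x‖ ^ 2 ∂μ) = ∫⁻ x in S, ‖F x‖ₑ ^ 2 ∂μ := by
    rw [ofReal_integral_eq_lintegral_ofReal hsqint (.of_forall fun x ↦ by positivity)]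
    simp only [ENNReal.ofReal_pow (norm_nonneg _), ofReal_norm]
  have hpair : ‖∫ x, h x * F x ∂μ‖ₑ = ∫⁻ x in S, ‖F x‖ₑ ^ 2 ∂μ := by
    have hmul : ∀ x, h x * F x = S.indicator (fun x ↦ ((‖F x‖ ^ 2 : ℝ) : 𝕜)) x := fun x ↦ by
      by_cases hx : x ∈ S <;> simp [h, hx, RCLike.conj_mul]
    simp only [hmul]
    rw [integral_indicator hS, integral_ofReal, ← ofReal_norm, RCLike.norm_ofReal,
      abs_of_nonneg (integral_nonneg fun x ↦ by positivity), hsqeq]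
  have hsq := hdual h (hconj.indicator hS) ((integrable_indicator_iff hS).2 hint)
  rw [hpair, hnorm, sq, mul_comm K] at hsq
  rcases eq_or_ne (∫⁻ x in S, ‖F x‖ₑ ^ 2 ∂μ) 0 with h0 | h0
  · exact h0.trans_le zero_le
  · exact (ENNReal.mul_le_mul_iff_right h0 (hsqeq ▸ ENNReal.ofReal_ne_top)).1 hsq

theorem lintegral_enorm_sq_le_of_dual {X 𝕜 : Type*} [RCLike 𝕜] [MeasurableSpace X]
    {μ : Measure X} [SigmaFinite μ] {F : X → 𝕜} {K : ℝ≥0∞} (hF : Measurable F)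
    (hdual : ∀ h : X → 𝕜, Measurable h → Integrable h μ →
      ‖∫ x, h x * F x ∂μ‖ₑ ^ 2 ≤ K * ∫⁻ x, ‖h x‖ₑ ^ 2 ∂μ) :
    ∫⁻ x, ‖F x‖ₑ ^ 2 ∂μ ≤ K := by
  set B : ℕ → Set X := fun n ↦ {x | ‖F x‖ ≤ n}
  have hB : Monotone B := fun m n hmn x (hx : ‖F x‖ ≤ m) ↦ hx.trans (Nat.cast_le.2 hmn)
  have hmono : Monotone fun n ↦ spanningSets μ n ∩ B n := (monotone_spanningSets μ).inter hB
  have hcover : ⋃ n, spanningSets μ n ∩ B n = univ := by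
    rw [iUnion_inter_of_monotone (monotone_spanningSets μ) hB, iUnion_spanningSets, univ_inter]
    exact eq_univ_of_forall fun x ↦ mem_iUnion.2 (exists_nat_ge ‖F x‖)
  rw [← setLIntegral_univ, ← hcover, setLIntegral_iUnion_of_directed _ hmono.directed_le]
  exact iSup_le fun n ↦ lintegral_restrict_enorm_sq_le_of_dual hF hdual
    ((measurableSet_spanningSets μ n).inter (measurableSet_le hF.norm measurable_const))
    (measure_inter_lt_top_of_left_ne_top (measure_spanningSets_lt_top μ n).ne).ne fun x hx ↦ hx.2

lemma sq_lintegral_mul_le {X : Type*} [MeasurableSpace X] {μ : Measure X} {u v w : X → ℝ≥0∞}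
    (hu : AEMeasurable u μ) (hv : AEMeasurable v μ) (hw : AEMeasurable w μ) (hw0 : ∀ x, w x ≠ 0)
    (hwtop : ∀ x, w x ≠ ∞) :
    (∫⁻ x, u x * v x ∂μ) ^ 2 ≤ (∫⁻ x, w x * u x ^ 2 ∂μ) * ∫⁻ x, (w x)⁻¹ * v x ^ 2 ∂μ := by
  have hsqrt : ∀ x, (w x ^ (1 / 2 : ℝ)) ^ 2 = w x := fun x ↦ by
    rw [← ENNReal.rpow_mul_natCast]; norm_num
  have hfactor : ∀ x, u x * v x = (w x ^ (1 / 2 : ℝ) * u x) * ((w x ^ (1 / 2 : ℝ))⁻¹ * v x) :=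
    fun x ↦ by
      rw [mul_mul_mul_comm, ENNReal.mul_inv_cancel (by simp [hw0]) (by simp [hwtop]), one_mul]
  have hHolder := ENNReal.lintegral_mul_le_Lp_mul_Lq μ .two_two
    (f := fun x ↦ w x ^ (1 / 2 : ℝ) * u x) (g := fun x ↦ (w x ^ (1 / 2 : ℝ))⁻¹ * v x)
    (by fun_prop) (by fun_prop)
  simp only [Pi.mul_apply, ← hfactor, ENNReal.rpow_two, mul_pow, ← ENNReal.inv_pow, hsqrt]
    at hHolder
  calc (∫⁻ x, u x * v x ∂μ) ^ 2
      ≤ ((∫⁻ x, w x * u x ^ 2 ∂μ) ^ (1 / 2 : ℝ)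
          * (∫⁻ x, (w x)⁻¹ * v x ^ 2 ∂μ) ^ (1 / 2 : ℝ)) ^ 2 := by gcongr
    _ = (∫⁻ x, w x * u x ^ 2 ∂μ) * ∫⁻ x, (w x)⁻¹ * v x ^ 2 ∂μ := by
        rw [mul_pow, ← ENNReal.rpow_mul_natCast, ← ENNReal.rpow_mul_natCast]
        norm_num

variable {p t : ℝ → ℝ} {g h : ℝ → ℂ}

theorem integral_mul_oscIntegral_eq_integral_mul_oscAdjoint (hp : Measurable p)
    (ht : Measurable t) (hg : Integrable g) (hh : Integrable h) :
    ∫ x, h x * oscIntegral p g x (t x) = ∫ ξ, g ξ * oscAdjoint p t h ξ := by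
  have hint : Integrable (Function.uncurry fun x ξ ↦
      Complex.exp (Complex.I * ((x * ξ + t x * p ξ : ℝ) : ℂ)) * (h x * g ξ))
      (volume.prod volume) :=
    (hh.mul_prod hg).bdd_mul (c := 1) (Measurable.aestronglyMeasurable (by fun_prop))
      (.of_forall fun z ↦ (Complex.norm_exp_I_mul_ofReal _).le)
  simp only [oscIntegral, oscAdjoint, ← integral_const_mul]
  refine Eq.trans ?_ ((integral_integral_swap hint).trans ?_)
  · simp only [mul_left_comm (h _)]
  · simp only [mul_comm (h _) (g _), mul_left_comm (g _)]

theorem lintegral_oscIntegral_sq_le_of_oscAdjoint {w : ℝ → ℝ≥0∞} {K : ℝ≥0∞} (hp : Measurable p)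
    (ht : Measurable t) (hw : Measurable w) (hw0 : ∀ ξ, w ξ ≠ 0) (hwtop : ∀ ξ, w ξ ≠ ∞)
    (hK : ∀ h : ℝ → ℂ, Measurable h → Integrable h →
      ∫⁻ ξ, (w ξ)⁻¹ * ‖oscAdjoint p t h ξ‖ₑ ^ 2 ≤ K * ∫⁻ x, ‖h x‖ₑ ^ 2)
    (hg : Integrable g) : ∫⁻ x, ‖oscIntegral p g x (t x)‖ₑ ^ 2 ≤ K * ∫⁻ ξ, w ξ * ‖g ξ‖ₑ ^ 2 := by
  have hmeas : Measurable fun x ↦ oscIntegral p g x (t x) :=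
    (continuous_oscIntegral hp hg).measurable.comp (measurable_id.prodMk ht)
  refine lintegral_enorm_sq_le_of_dual hmeas fun h hhm hh ↦ ?_
  calc ‖∫ x, h x * oscIntegral p g x (t x)‖ₑ ^ 2
      = ‖∫ ξ, g ξ * oscAdjoint p t h ξ‖ₑ ^ 2 := by
        rw [integral_mul_oscIntegral_eq_integral_mul_oscAdjoint hp ht hg hh]
    _ ≤ (∫⁻ ξ, ‖g ξ‖ₑ * ‖oscAdjoint p t h ξ‖ₑ) ^ 2 := by
        gcongr
        refine (enorm_integral_le_lintegral_enorm _).trans_eq ?_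
        simp only [enorm_mul]
    _ ≤ (∫⁻ ξ, w ξ * ‖g ξ‖ₑ ^ 2) * ∫⁻ ξ, (w ξ)⁻¹ * ‖oscAdjoint p t h ξ‖ₑ ^ 2 :=
        sq_lintegral_mul_le hg.aestronglyMeasurable.enorm
          (measurable_oscAdjoint hp ht hhm).enorm.aemeasurable hw.aemeasurable hw0 hwtop
    _ ≤ (∫⁻ ξ, w ξ * ‖g ξ‖ₑ ^ 2) * (K * ∫⁻ x, ‖h x‖ₑ ^ 2) := by
        gcongr
        exact hK h hhm hh
    _ = K * (∫⁻ ξ, w ξ * ‖g ξ‖ₑ ^ 2) * ∫⁻ x, ‖h x‖ₑ ^ 2 := by ring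

end Duality

section MeasurableSelection

theorem exists_measurable_iSup_le_two_mul {X ι : Type*} [MeasurableSpace X] [TopologicalSpace ι]
    [TopologicalSpace.SeparableSpace ι] [Nonempty ι] [MeasurableSpace ι] {F : X → ι → ℝ≥0∞}
    (hF : ∀ i, Measurable fun x ↦ F x i) (hcont : ∀ x, LowerSemicontinuous (F x))
    (hfin : ∀ x, ⨆ i, F x i ≠ ∞) :
    ∃ τ : X → ι, Measurable τ ∧ ∀ x, ⨆ i, F x i ≤ 2 * F x (τ x) := by
  classical
  set q : ℕ → ι := TopologicalSpace.denseSeq ι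
  have hdense : ∀ x i c, c < F x i → ∃ n, c < F x (q n) := fun x i c hc ↦
    (TopologicalSpace.denseRange_denseSeq ι).exists_mem_open ((hcont x).isOpen_preimage c) ⟨i, hc⟩
  have hex : ∀ x, ∃ n, ⨆ i, F x i ≤ 2 * F x (q n) := fun x ↦ by
    rcases eq_or_ne (⨆ i, F x i) 0 with h0 | h0
    · exact ⟨0, h0.trans_le zero_le⟩
    · obtain ⟨i, hi⟩ := lt_iSup_iff.1 (ENNReal.half_lt_self h0 (hfin x))
      obtain ⟨n, hn⟩ := hdense x i _ hi
      refine ⟨n, ?_⟩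
      rw [mul_comm]
      exact ((ENNReal.div_lt_iff (.inl two_ne_zero) (.inl ENNReal.ofNat_ne_top)).1 hn).le
  have hsup : ∀ x, ⨆ i, F x i = ⨆ n, F x (q n) := fun x ↦
    (iSup_le fun i ↦ le_of_forall_lt fun c hc ↦ lt_iSup_iff.2 (hdense x i c hc)).antisymm
      (iSup_le fun n ↦ le_iSup (F x) (q n))
  have hmeas : Measurable fun x ↦ ⨆ i, F x i := by
    simp only [hsup]
    exact .iSup fun n ↦ hF (q n)
  exact ⟨fun x ↦ q (Nat.find (hex x)), (measurable_from_nat (f := q)).comp <|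
    measurable_find hex fun n ↦ measurableSet_le hmeas ((hF (q n)).const_mul 2),
    fun x ↦ Nat.find_spec (hex x)⟩

end MeasurableSelection

section MaximalEstimate

variable {p : ℝ → ℝ} {g : ℝ → ℂ}

lemma maxOscIntegral_ne_top (hg : Integrable g) (T x : ℝ) : maxOscIntegral p g T x ≠ ∞ := by
  refine ((iSup_le fun t ↦ ?_).trans_lt hg.2).ne
  exact (enorm_integral_le_lintegral_enorm _).trans_eq <| by
    simp only [enorm_mul, Complex.enorm_exp_I_mul_ofReal, one_mul]

theorem exists_measurable_maxOscIntegral_le {T : ℝ} (hT : 0 ≤ T) (hp : Measurable p)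
    (hg : Integrable g) :
    ∃ t : ℝ → ℝ, Measurable t ∧ (∀ x, |t x| ≤ T) ∧
      ∀ x, maxOscIntegral p g T x ≤ 2 * ‖oscIntegral p g x (t x)‖ₑ := by
  have : Nonempty (Icc (-T) T) := ⟨⟨0, by simpa using hT⟩⟩
  have hcont := (continuous_oscIntegral hp hg).enorm
  obtain ⟨τ, hτ, hle⟩ := exists_measurable_iSup_le_two_mul
    (F := fun x (t : Icc (-T) T) ↦ ‖oscIntegral p g x t‖ₑ)
    (fun t ↦ (hcont.comp (.prodMk_left (t : ℝ))).measurable)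
    (fun x ↦ (hcont.comp (by fun_prop : Continuous fun t : Icc (-T) T ↦
      (x, (t : ℝ)))).lowerSemicontinuous)
    (maxOscIntegral_ne_top hg T)
  exact ⟨fun x ↦ τ x, measurable_subtype_coe.comp hτ, fun x ↦ abs_le.2 (τ x).2, hle⟩

theorem lintegral_maxOscIntegral_sq_le_of_oscAdjoint {w : ℝ → ℝ≥0∞} {K : ℝ≥0∞} {T : ℝ}
    (hT : 0 ≤ T) (hp : Measurable p) (hw : Measurable w) (hw0 : ∀ ξ, w ξ ≠ 0)
    (hwtop : ∀ ξ, w ξ ≠ ∞)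
    (hK : ∀ t : ℝ → ℝ, Measurable t → (∀ x, |t x| ≤ T) → ∀ h : ℝ → ℂ, Measurable h →
      Integrable h → ∫⁻ ξ, (w ξ)⁻¹ * ‖oscAdjoint p t h ξ‖ₑ ^ 2 ≤ K * ∫⁻ x, ‖h x‖ₑ ^ 2)
    (hg : Integrable g) :
    ∫⁻ x, maxOscIntegral p g T x ^ 2 ≤ 4 * K * ∫⁻ ξ, w ξ * ‖g ξ‖ₑ ^ 2 := by
  obtain ⟨t, htm, ht, hle⟩ := exists_measurable_maxOscIntegral_le hT hp hg
  calc ∫⁻ x, maxOscIntegral p g T x ^ 2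
      ≤ ∫⁻ x, 4 * ‖oscIntegral p g x (t x)‖ₑ ^ 2 := by
        refine lintegral_mono fun x ↦ (pow_le_pow_left' (hle x) 2).trans_eq ?_
        rw [mul_pow]
        norm_num
    _ ≤ 4 * (K * ∫⁻ ξ, w ξ * ‖g ξ‖ₑ ^ 2) := by
        rw [lintegral_const_mul' _ _ ENNReal.ofNat_ne_top]
        gcongr
        exact lintegral_oscIntegral_sq_le_of_oscAdjoint hp htm hw hw0 hwtop (hK t htm ht) hg
    _ = 4 * K * ∫⁻ ξ, w ξ * ‖g ξ‖ₑ ^ 2 := (mul_assoc _ _ _).symm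

theorem exists_lintegral_maxOscIntegral_sq_le_besselWeight {a s : ℝ} (ha : 0 < a) (ha1 : a ≠ 1)
    (hs : a / 4 < s) :
    ∃ C : ℝ≥0, ∀ g : ℝ → ℂ, Integrable g →
      ∫⁻ x, maxOscIntegral (powerPhase a) g 1 x ^ 2
        ≤ C * ∫⁻ ξ, ENNReal.ofReal ((1 + |ξ| ^ 2) ^ s) * ‖g ξ‖ₑ ^ 2 := by
  obtain ⟨C, hC⟩ := exists_lintegral_besselWeight_oscAdjoint_le ha ha1 hs
  have hpos : ∀ ξ : ℝ, 0 < (1 + |ξ| ^ 2) ^ s := fun ξ ↦ by positivity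
  have hinv : ∀ ξ : ℝ,
      (ENNReal.ofReal ((1 + |ξ| ^ 2) ^ s))⁻¹ = ENNReal.ofReal ((1 + |ξ| ^ 2) ^ (-s)) := fun ξ ↦ by
    rw [rpow_neg (by positivity), ENNReal.ofReal_inv_of_pos (hpos ξ)]
  refine ⟨4 * C, fun g hg ↦ ?_⟩
  rw [ENNReal.coe_mul, ENNReal.coe_ofNat]
  refine lintegral_maxOscIntegral_sq_le_of_oscAdjoint zero_le_one (measurable_powerPhase a)
    (by fun_prop) (fun ξ ↦ (ENNReal.ofReal_pos.2 (hpos ξ)).ne') (fun ξ ↦ ENNReal.ofReal_ne_top)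
    ?_ hg
  simpa only [hinv] using hC

end MaximalEstimate

section SchwartzFunctions

lemma exists_schwartzMap_eq_FT1 (f : 𝓢(ℝ, ℂ)) : ∃ g : 𝓢(ℝ, ℂ), ⇑g = FT1 f := by
  have hpi : (2 * π)⁻¹ ≠ 0 := by positivity
  let L : ℝ ≃L[ℝ] ℝ := ContinuousLinearEquiv.smulLeft (Units.mk0 _ hpi)
  refine ⟨SchwartzMap.compCLMOfContinuousLinearEquiv ℂ L (𝓕 f), funext fun ξ ↦ ?_⟩
  rw [SchwartzMap.compCLMOfContinuousLinearEquiv_apply, Function.comp_apply,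
    SchwartzMap.fourier_coe, Real.fourier_real_eq_integral_exp_smul, FT1]
  refine integral_congr_ae (.of_forall fun x ↦ ?_)
  have hphase : -2 * π * x * L ξ = -(x * ξ) := by
    change -2 * π * x * ((2 * π)⁻¹ * ξ) = _
    field_simp
  dsimp only
  rw [hphase, smul_eq_mul, Complex.ofReal_neg, neg_mul, mul_comm Complex.I]

lemma integrable_one_add_norm_sq_rpow_mul_norm_sq {E F : Type*} [NormedAddCommGroup E]
    [InnerProductSpace ℝ E] [MeasurableSpace E] [BorelSpace E] [SecondCountableTopology E]
    [NormedAddCommGroup F] [NormedSpace ℝ F] {μ : Measure E} [μ.HasTemperateGrowth] (g : 𝓢(E, F))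
    (s : ℝ) : Integrable (fun ξ ↦ (1 + ‖ξ‖ ^ 2) ^ s * ‖g ξ‖ ^ 2) μ := by
  have hweight : Integrable (fun ξ ↦ (1 + ‖ξ‖ ^ 2) ^ s • g ξ) μ := by
    have := (SchwartzMap.smulLeftCLM F (fun ξ : E ↦ (1 + ‖ξ‖ ^ 2) ^ s) g).integrable (μ := μ)
    refine this.congr (.of_forall fun ξ ↦ ?_)
    exact SchwartzMap.smulLeftCLM_apply_apply
      (Function.hasTemperateGrowth_one_add_norm_sq_rpow E s) g ξ
  refine (hweight.norm.mul_bdd (c := SchwartzMap.seminorm ℝ 0 0 g)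
    g.continuous.norm.aestronglyMeasurable
    (.of_forall fun ξ ↦ by rw [norm_norm]; exact g.norm_le_seminorm ℝ ξ)).congr
    (.of_forall fun ξ ↦ ?_)
  dsimp only
  rw [norm_smul, norm_of_nonneg (by positivity), sq ‖g ξ‖, mul_assoc]

end SchwartzFunctions

lemma norm_Sosc1_le (a : ℝ) (f : ℝ → ℂ) (x t : ℝ) :
    ‖Sosc1 a f x t‖ ≤ ‖oscIntegral (powerPhase a) (FT1 f) x t‖ := by
  rw [Sosc1, norm_mul, norm_inv, Complex.norm_real, norm_of_nonneg (by positivity)]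
  exact mul_le_of_le_one_left (norm_nonneg _)
    (inv_le_one_of_one_le₀ (by linarith [Real.pi_gt_three]))

lemma enorm_iSup_norm_Sosc1_le (a : ℝ) (f : ℝ → ℂ) (x : ℝ) :
    ‖⨆ t : Ioo (-1 : ℝ) 1, ‖Sosc1 a f x t‖‖ₑ ≤ maxOscIntegral (powerPhase a) (FT1 f) 1 x := by
  rw [Real.enorm_of_nonneg (Real.iSup_nonneg fun t ↦ norm_nonneg _)]
  rcases eq_or_ne (maxOscIntegral (powerPhase a) (FT1 f) 1 x) ∞ with htop | htop
  · exact htop ▸ le_top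
  refine ENNReal.ofReal_le_of_le_toReal (Real.iSup_le (fun t ↦ ?_) ENNReal.toReal_nonneg)
  refine (norm_Sosc1_le a f x t).trans ((ENNReal.ofReal_le_iff_le_toReal htop).1 ?_)
  rw [ofReal_norm]
  exact enorm_oscIntegral_le_maxOscIntegral (Ioo_subset_Icc_self t.2)

theorem exists_integral_iSup_norm_Sosc1_sq_le {a s : ℝ} (ha : 0 < a) (ha1 : a ≠ 1)
    (hs : a / 4 < s) :
    ∃ C : ℝ≥0, ∀ f : 𝓢(ℝ, ℂ), ∫ x, (⨆ t : Ioo (-1 : ℝ) 1, ‖Sosc1 a f x t‖) ^ 2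
      ≤ C * ∫ ξ, (1 + |ξ| ^ 2) ^ s * ‖FT1 f ξ‖ ^ 2 := by
  obtain ⟨C, hC⟩ := exists_lintegral_maxOscIntegral_sq_le_besselWeight ha ha1 hs
  refine ⟨C, fun f ↦ ?_⟩
  obtain ⟨g, hg⟩ := exists_schwartzMap_eq_FT1 f
  have hnorm : ENNReal.ofReal (∫ ξ, (1 + |ξ| ^ 2) ^ s * ‖FT1 f ξ‖ ^ 2)
      = ∫⁻ ξ, ENNReal.ofReal ((1 + |ξ| ^ 2) ^ s) * ‖FT1 f ξ‖ₑ ^ 2 := by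
    have hint : Integrable fun ξ ↦ (1 + |ξ| ^ 2) ^ s * ‖FT1 f ξ‖ ^ 2 :=
      hg ▸ integrable_one_add_norm_sq_rpow_mul_norm_sq g s
    rw [ofReal_integral_eq_lintegral_ofReal hint (.of_forall fun ξ ↦ by positivity)]
    refine lintegral_congr fun ξ ↦ ?_
    rw [ENNReal.ofReal_mul (by positivity), ENNReal.ofReal_pow (norm_nonneg _), ofReal_norm]
  refine (ENNReal.ofReal_le_ofReal_iff (by positivity)).1 ?_
  calc ENNReal.ofReal (∫ x, (⨆ t : Ioo (-1 : ℝ) 1, ‖Sosc1 a f x t‖) ^ 2)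
      ≤ ∫⁻ x, ‖(⨆ t : Ioo (-1 : ℝ) 1, ‖Sosc1 a f x t‖) ^ 2‖ₑ :=
        (Real.ofReal_le_enorm _).trans (enorm_integral_le_lintegral_enorm _)
    _ ≤ ∫⁻ x, maxOscIntegral (powerPhase a) (FT1 f) 1 x ^ 2 := by
        gcongr with x
        rw [enorm_pow]
        exact pow_le_pow_left' (enorm_iSup_norm_Sosc1_le a f x) 2
    _ ≤ C * ENNReal.ofReal (∫ ξ, (1 + |ξ| ^ 2) ^ s * ‖FT1 f ξ‖ ^ 2) :=
        hnorm ▸ hC _ (hg ▸ g.integrable)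
    _ = ENNReal.ofReal (C * ∫ ξ, (1 + |ξ| ^ 2) ^ s * ‖FT1 f ξ‖ ^ 2) := by
        rw [ENNReal.ofReal_mul C.coe_nonneg, ENNReal.ofReal_coe_nnreal]

theorem stmt5_general (a : ℝ) (ha : 0 < a) (ha1 : a ≠ 1) (s : ℝ) (hs : a / 4 < s) :
    ∃ C > 0, ∀ f : 𝓢(ℝ, ℂ),
      (∫ x, (⨆ t : Ioo (-1 : ℝ) 1, ‖Sosc1 a f x t‖) ^ 2) ^ (1/2 : ℝ)
        ≤ C * (∫ ξ, (1 + |ξ| ^ 2) ^ s * ‖FT1 f ξ‖ ^ 2) ^ (1/2 : ℝ) := by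
  obtain ⟨C, hC⟩ := exists_integral_iSup_norm_Sosc1_sq_le ha ha1 hs
  refine ⟨(C + 1) ^ (1/2 : ℝ), by positivity, fun f ↦ ?_⟩
  rw [← Real.mul_rpow (by positivity) (by positivity)]
  refine rpow_le_rpow (by positivity) ((hC f).trans ?_) (by norm_num)
  gcongr
  exact le_add_of_nonneg_right zero_le_one

theorem stmt5 (a : ℝ) (ha : 0 < a) (ha1 : a ≠ 1) (s : ℝ) (hs : a / 4 < s) :
    ∃ C > 0, ∀ f : ℝ → ℂ,
      ContDiff ℝ (⊤ : ℕ∞) f → HasCompactSupport f → 0 ∉ tsupport f →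
      (∫ x, (⨆ t : Set.Ioo (-1 : ℝ) 1, ‖Sosc1 a f x t‖) ^ 2) ^ (1/2 : ℝ)
        ≤ C * (∫ ξ, (1 + |ξ| ^ 2) ^ s * ‖FT1 f ξ‖ ^ 2) ^ (1/2 : ℝ) := by
  obtain ⟨C, hC0, hC⟩ := stmt5_general a ha ha1 s hs
  exact ⟨C, hC0, fun _ hf hc _ ↦ hC (hc.toSchwartzMap hf)⟩
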